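/- arXiv:2012.13515 — 3 statements merged into one kernel-verified Lean document; each statement's English description precedes it below -/
import Mathlib

section
/- Let E ⊆ ℝ² be compact, ε > 0, and x ∈ ∂E_ε. Then: (i) if Π_E(x) = {y} is a singleton, then Ξ_x(E_ε) = {ξ ∈ S¹ : ⟨y − x, ξ⟩ ≤ 0}; (ii) if Π_E(x) contains at least two points, then Ξ_x(E_ε) = [ξ₁, ξ₂]_{S¹}, where ξ₁ and ξ₂ are extremal outward directions at x (possibly ξ₁ = ξ₂) and they are the only extremal outward directions at x. -/
open Metric Set Filter Topology RealInnerProductSpace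

noncomputable section

/-- The Euclidean plane. -/
abbrev Plane := EuclideanSpace ℝ (Fin 2)

/-- The closed ε-neighbourhood of a set `E ⊆ ℝ²`: the closure of the union of open
ε-balls centred at points of `E`. -/
def eNbhd (E : Set Plane) (ε : ℝ) : Set Plane :=
  closure (⋃ y ∈ E, ball y ε)

/-- The set of contributors of a boundary point `x ∈ ∂E_ε`: points `y ∈ ∂E` with
`‖y - x‖ = ε`. -/
def contributors (E : Set Plane) (ε : ℝ) (x : Plane) : Set Plane :=
  {y ∈ frontier E | ‖y - x‖ = ε}

/-- The set of outward directions from `E_ε` at `x`. -/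
def outwardDirs (E : Set Plane) (ε : ℝ) (x : Plane) : Set Plane :=
  {ξ | ‖ξ‖ = 1 ∧ ∃ u : ℕ → Plane, (∀ n, u n ∉ eNbhd E ε) ∧
    Tendsto u atTop (nhds x) ∧
    Tendsto (fun n => (‖u n - x‖)⁻¹ • (u n - x)) atTop (nhds ξ)}

/-- The set of extremal outward directions at `x`: outward directions perpendicular to
`y - x` for some contributor `y`. -/
def extOutward (E : Set Plane) (ε : ℝ) (x : Plane) : Set Plane :=
  {ξ ∈ outwardDirs E ε x | ∃ y ∈ contributors E ε x, ⟪y - x, ξ⟫ = 0}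

/-- The set of extremal contributors at `x`: contributors perpendicular to some
outward direction. -/
def extContrib (E : Set Plane) (ε : ℝ) (x : Plane) : Set Plane :=
  {y ∈ contributors E ε x | ∃ ξ ∈ outwardDirs E ε x, ⟪y - x, ξ⟫ = 0}

/-- The set of extremal pairs at `x`. -/
def extPairs (E : Set Plane) (ε : ℝ) (x : Plane) : Set (Plane × Plane) :=
  {p | p.1 ∈ outwardDirs E ε x ∧ p.2 ∈ contributors E ε x ∧ ⟪p.2 - x, p.1⟫ = 0}

/-- The set `Unp(E)` of boundary points of `E_ε` with a unique contributor. -/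
def unp (E : Set Plane) (ε : ℝ) : Set Plane :=
  {x ∈ frontier (eNbhd E ε) | ∃ y, contributors E ε x = {y}}

/-- A boundary point `x ∈ ∂E_ε` is smooth if `x ∈ Unp(E)` and a whole neighbourhood of
`x` on the boundary consists of points of `Unp(E)`. -/
def IsSmoothPt (E : Set Plane) (ε : ℝ) (x : Plane) : Prop :=
  x ∈ unp E ε ∧ ∃ r > 0, frontier (eNbhd E ε) ∩ ball x r ⊆ unp E ε

/-- A singularity: a non-smooth boundary point of `E_ε`. -/
def IsSingularity (E : Set Plane) (ε : ℝ) (x : Plane) : Prop :=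
  x ∈ frontier (eNbhd E ε) ∧ ¬ IsSmoothPt E ε x

/-- The open half-ball of radius `r` at `x` in direction `v`. -/
def halfBall (x v : Plane) (r : ℝ) : Set Plane :=
  {z ∈ ball x r | 0 < ⟪z - x, v⟫}

/-- `V` is a connected component of the complement of `E_ε`. -/
def IsCompOfCompl (E : Set Plane) (ε : ℝ) (V : Set Plane) : Prop :=
  ∃ z, z ∉ eNbhd E ε ∧ V = connectedComponentIn (eNbhd E ε)ᶜ z

/-- The closed geodesic arc-segment between `v, w ∈ S¹`. -/
def arcSeg (v w : Plane) : Set Plane :=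
  {u | ‖u‖ = 1 ∧ ∃ a b : ℝ, 0 ≤ a ∧ 0 ≤ b ∧ u = a • v + b • w}

/-- The open geodesic arc-segment between `v, w ∈ S¹`. -/
def openArc (v w : Plane) : Set Plane :=
  arcSeg v w \ {v, w}

/-- A chain sequence for `x`: a sequence of singularities converging to `x` whose
extremal contributors become increasingly opposed. -/
def IsChainSeq (E : Set Plane) (ε : ℝ) (x : Plane) (u : ℕ → Plane) : Prop :=
  (∀ n, IsSingularity E ε (u n)) ∧ (∀ n, u n ≠ x) ∧ Tendsto u atTop (nhds x) ∧
  ∃ y1 y2 : ℕ → Plane, (∀ n, extContrib E ε (u n) = {y1 n, y2 n}) ∧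
    Tendsto (fun n => ⟪ε⁻¹ • (y1 n - u n), ε⁻¹ • (y2 n - u n)⟫) atTop (nhds (-1))

/-- Type S1: wedge. -/
def IsWedge (E : Set Plane) (ε : ℝ) (x : Plane) : Prop :=
  IsSingularity E ε x ∧
  ∃ ξ₁ ξ₂, extOutward E ε x = {ξ₁, ξ₂} ∧ ξ₁ ≠ ξ₂ ∧ ξ₁ ≠ -ξ₂

/-- Type S2: one-sided sharp singularity. -/
def IsSharp (E : Set Plane) (ε : ℝ) (x : Plane) : Prop :=
  IsSingularity E ε x ∧ (∃ ξ, extOutward E ε x = {ξ}) ∧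
  ∃ δ > 0, IsConnected (ball x δ ∩ (eNbhd E ε)ᶜ)

/-- Type S3: sharp-sharp singularity. -/
def IsSharpSharp (E : Set Plane) (ε : ℝ) (x : Plane) : Prop :=
  IsSingularity E ε x ∧ ∃ ξ, extOutward E ε x = {ξ, -ξ} ∧
    ∀ η ∈ ({ξ, -ξ} : Set Plane), ∃ δ > 0, IsConnected (halfBall x η δ ∩ (eNbhd E ε)ᶜ)

/-- Type S4: one-sided shallow singularity. -/
def IsShallow (E : Set Plane) (ε : ℝ) (x : Plane) : Prop :=
  IsSingularity E ε x ∧ x ∈ unp E ε ∧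
  ∃ ξ₁ ξ₂, extOutward E ε x = {ξ₁, ξ₂} ∧
    (∃ δ > 0, halfBall x ξ₁ δ ∩ frontier (eNbhd E ε) ⊆ unp E ε) ∧
    (∀ δ > 0, ¬ (halfBall x ξ₂ δ ∩ frontier (eNbhd E ε) ⊆ unp E ε))

/-- Type S5: shallow-shallow singularity. -/
def IsShallowShallow (E : Set Plane) (ε : ℝ) (x : Plane) : Prop :=
  IsSingularity E ε x ∧ x ∈ unp E ε ∧
  ∃ ξ₁ ξ₂, extOutward E ε x = {ξ₁, ξ₂} ∧
    ∀ η ∈ ({ξ₁, ξ₂} : Set Plane), ∀ δ > 0,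
      ¬ (halfBall x η δ ∩ frontier (eNbhd E ε) ⊆ unp E ε)

/-- Type S6: one-sided chain singularity. -/
def IsChainSing (E : Set Plane) (ε : ℝ) (x : Plane) : Prop :=
  IsSingularity E ε x ∧ (∃ ξ, extOutward E ε x = {ξ}) ∧
  ∃ u, IsChainSeq E ε x u

/-- Type S7: chain-chain singularity. -/
def IsChainChain (E : Set Plane) (ε : ℝ) (x : Plane) : Prop :=
  IsSingularity E ε x ∧ ∃ ξ, extOutward E ε x = {ξ, -ξ} ∧
    ∀ η ∈ ({ξ, -ξ} : Set Plane), ∃ δ > 0, ∃ u,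
      IsChainSeq E ε x u ∧ ∀ n, u n ∈ halfBall x η δ

/-- Type S8: sharp-chain singularity. -/
def IsSharpChain (E : Set Plane) (ε : ℝ) (x : Plane) : Prop :=
  IsSingularity E ε x ∧ ∃ ξ, extOutward E ε x = {ξ, -ξ} ∧
    (∃ δ > 0, IsConnected (halfBall x ξ δ ∩ (eNbhd E ε)ᶜ)) ∧
    (∃ δ > 0, ∃ u, IsChainSeq E ε x u ∧ ∀ n, u n ∈ halfBall x (-ξ) δ)

lemma aux_eNbhd {E : Set Plane} (hE : IsCompact E) {ε : ℝ} (hε : 0 < ε) (u : Plane) :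
    u ∈ eNbhd E ε ↔ ∃ y ∈ E, ‖y - u‖ ≤ ε := by
  have h : eNbhd E ε = ⋃ y ∈ E, closedBall y ε := by
    unfold eNbhd
    rw [← thickening_eq_biUnion_ball, closure_thickening hε,
      hE.cthickening_eq_biUnion_closedBall hε.le]
  rw [h]
  simp [mem_closedBall, dist_eq_norm, norm_sub_rev]

lemma aux_dist {E : Set Plane} {ε : ℝ}
    {x : Plane} (hx : x ∈ frontier (eNbhd E ε)) (y : Plane) (hy : y ∈ E) : ε ≤ ‖y - x‖ := by
  by_contra h
  push Not at h
  apply hx.2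
  refine mem_interior.2 ⟨ball y ε, ?_, isOpen_ball, ?_⟩
  · exact (subset_biUnion_of_mem (u := fun y => ball y ε) hy).trans subset_closure
  · rw [mem_ball, dist_eq_norm, norm_sub_rev]; exact h

lemma aux_contrib {E : Set Plane} (hE : IsCompact E) {ε : ℝ} (hε : 0 < ε)
    {x : Plane} (hx : x ∈ frontier (eNbhd E ε)) (y : Plane) :
    y ∈ contributors E ε x ↔ y ∈ E ∧ ‖y - x‖ = ε := by
  constructor
  · rintro ⟨h1, h2⟩
    exact ⟨hE.isClosed.frontier_subset h1, h2⟩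
  · rintro ⟨h1, h2⟩
    refine ⟨⟨subset_closure h1, fun hi => ?_⟩, h2⟩
    have hc : Tendsto (fun t : ℝ => y + t • (x - y)) (𝓝[>] 0) (𝓝 y) := by
      have : Continuous (fun t : ℝ => y + t • (x - y)) := by fun_prop
      have h := this.tendsto 0
      simp only [zero_smul, add_zero] at h
      exact h.mono_left nhdsWithin_le_nhds
    have h3 := hc.eventually (mem_interior_iff_mem_nhds.1 hi)
    have h4 : ∀ᶠ t : ℝ in 𝓝[>] 0, t < 1 :=
      nhdsWithin_le_nhds (Iio_mem_nhds one_pos)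
    obtain ⟨t, ⟨h3, h4⟩, h5⟩ := ((h3.and h4).and self_mem_nhdsWithin).exists
    have h5 : 0 < t := h5
    have h6 := aux_dist hx _ h3
    have h7 : y + t • (x - y) - x = (1 - t) • (y - x) := by module
    rw [h7, norm_smul, h2, Real.norm_of_nonneg (by linarith)] at h6
    nlinarith

lemma aux_exp (a v : Plane) (t : ℝ) :
    ‖a - t • v‖ ^ 2 = ‖a‖ ^ 2 - 2 * t * ⟪a, v⟫ + t ^ 2 * ‖v‖ ^ 2 := by
  rw [norm_sub_sq_real, inner_smul_right, norm_smul, mul_pow, Real.norm_eq_abs, sq_abs]; ring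

lemma aux_ray {E : Set Plane} (hE : IsCompact E) {ε : ℝ} (hε : 0 < ε)
    {x : Plane} (hx : x ∈ frontier (eNbhd E ε)) (v : Plane)
    (hv : ∀ y ∈ contributors E ε x, ⟪y - x, v⟫ < 0) (δ : ℝ) (hδ : 0 < δ) :
    ∃ t, 0 < t ∧ t < δ ∧ x + t • v ∉ eNbhd E ε := by
  by_contra! hcon
  obtain ⟨t, -, htm, htl⟩ := exists_seq_strictAnti_tendsto' hδ
  have h1 : ∀ n, ∃ y ∈ E, ‖y - (x + t n • v)‖ ≤ ε := fun n =>
    (aux_eNbhd hE hε _).1 (hcon (t n) (htm n).1 (htm n).2)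
  choose y hyE hy using h1
  obtain ⟨z, hz, φ, hφ, hlim⟩ := hE.tendsto_subseq hyE
  have ht' := htl.comp hφ.tendsto_atTop
  have hin : ∀ n, 0 ≤ ⟪y n - x, v⟫ := by
    intro n
    have h2 := hy n
    have h3 := aux_dist hx _ (hyE n)
    have h4 := aux_exp (y n - x) v (t n)
    rw [← sub_sub] at h2
    have h5 := pow_le_pow_left₀ (norm_nonneg _) h2 2
    have h6 := pow_le_pow_left₀ hε.le h3 2
    have h7 : 0 < t n := (htm n).1
    by_contra! h8
    have := mul_pos h7 (neg_pos.2 h8)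
    nlinarith [mul_nonneg (sq_nonneg (t n)) (sq_nonneg ‖v‖)]
  have hL1 : Tendsto (fun n => ⟪y (φ n) - x, v⟫) atTop (𝓝 ⟪z - x, v⟫) :=
    (hlim.sub tendsto_const_nhds).inner tendsto_const_nhds
  have h9 : 0 ≤ ⟪z - x, v⟫ := ge_of_tendsto' hL1 fun n => hin _
  have hL2 : Tendsto (fun n => ‖y (φ n) - (x + t (φ n) • v)‖) atTop
      (𝓝 ‖z - (x + (0 : ℝ) • v)‖) :=
    (hlim.sub (tendsto_const_nhds.add (ht'.smul tendsto_const_nhds))).norm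
  have h10 := le_of_tendsto' hL2 fun n => hy _
  rw [zero_smul, add_zero] at h10
  have := hv z ((aux_contrib hE hε hx z).2 ⟨hz, le_antisymm h10 (aux_dist hx z hz)⟩)
  linarith

lemma aux_char {E : Set Plane} {ε : ℝ} {x ξ : Plane} (h1 : ‖ξ‖ = 1)
    (h : ∀ δ > 0, ∃ u, u ∉ eNbhd E ε ∧ dist u x < δ ∧ dist ((‖u - x‖)⁻¹ • (u - x)) ξ < δ) :
    ξ ∈ outwardDirs E ε x := by
  refine ⟨h1, ?_⟩
  have h2 : ∀ n : ℕ, (0 : ℝ) < 1 / ((n : ℝ) + 1) := fun n => by positivity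
  choose u hu using fun n : ℕ => h _ (h2 n)
  have hl : Tendsto (fun n : ℕ => 1 / ((n : ℝ) + 1)) atTop (𝓝 0) :=
    tendsto_one_div_add_atTop_nhds_zero_nat
  refine ⟨u, fun n => (hu n).1, ?_, ?_⟩
  · rw [tendsto_iff_dist_tendsto_zero]
    exact squeeze_zero (fun _ => dist_nonneg) (fun n => (hu n).2.1.le) hl
  · rw [tendsto_iff_dist_tendsto_zero]
    exact squeeze_zero (fun _ => dist_nonneg) (fun n => (hu n).2.2.le) hl

lemma aux_sub {E : Set Plane} (hE : IsCompact E) {ε : ℝ} (hε : 0 < ε)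
    {x : Plane} (hx : x ∈ frontier (eNbhd E ε)) {ξ : Plane} (hξ : ξ ∈ outwardDirs E ε x)
    (y : Plane) (hy : y ∈ contributors E ε x) : ⟪y - x, ξ⟫ ≤ 0 := by
  obtain ⟨-, u, hu, hux, hud⟩ := hξ
  rw [aux_contrib hE hε hx] at hy
  have h1 : ∀ n, ⟪y - x, (‖u n - x‖)⁻¹ • (u n - x)⟫ ≤ ‖u n - x‖ / 2 := by
    intro n
    have h2 := hu n
    rw [aux_eNbhd hE hε] at h2
    push Not at h2
    have h3 := h2 y hy.1
    have h4 := aux_exp (y - x) (u n - x) 1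
    rw [one_smul, sub_sub_sub_cancel_right] at h4
    have h5 := pow_lt_pow_left₀ h3 hε.le two_ne_zero
    rw [hy.2] at h4
    have h6 : 2 * ⟪y - x, u n - x⟫ ≤ ‖u n - x‖ ^ 2 := by linarith
    rw [inner_smul_right]
    rcases (norm_nonneg (u n - x)).eq_or_lt with h7 | h7
    · rw [← h7]; simp
    · rw [inv_mul_le_iff₀ h7]; nlinarith
  have h2 : Tendsto (fun n => ‖u n - x‖ / 2) atTop (𝓝 (‖x - x‖ / 2)) :=
    (hux.sub tendsto_const_nhds).norm.div_const 2
  have h3 := le_of_tendsto_of_tendsto' (tendsto_const_nhds.inner hud) h2 h1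
  simpa using h3

lemma aux_strict {E : Set Plane} (hE : IsCompact E) {ε : ℝ} (hε : 0 < ε)
    {x : Plane} (hx : x ∈ frontier (eNbhd E ε)) (v : Plane)
    (hv : ∀ y ∈ contributors E ε x, ⟪y - x, v⟫ < 0) (δ : ℝ) (hδ : 0 < δ) :
    ∃ u, u ∉ eNbhd E ε ∧ dist u x < δ ∧ (‖u - x‖)⁻¹ • (u - x) = (‖v‖)⁻¹ • v := by
  obtain ⟨t, h1, h2, h3⟩ := aux_ray hE hε hx v hv (δ / (‖v‖ + 1)) (by positivity)
  refine ⟨_, h3, ?_, ?_⟩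
  · rw [dist_eq_norm, add_sub_cancel_left, norm_smul, Real.norm_of_nonneg h1.le]
    rw [lt_div_iff₀ (by positivity)] at h2
    linarith
  · rw [add_sub_cancel_left, norm_smul, Real.norm_of_nonneg h1.le, smul_smul, mul_inv]
    congr 1
    field_simp

lemma aux_eq {E : Set Plane} (hE : IsCompact E) {ε : ℝ} (hε : 0 < ε)
    {x : Plane} (hx : x ∈ frontier (eNbhd E ε)) (v : Plane)
    (hv : ∀ y ∈ contributors E ε x, ⟪y - x, v⟫ < 0) :
    outwardDirs E ε x = {ξ | ‖ξ‖ = 1 ∧ ∀ y ∈ contributors E ε x, ⟪y - x, ξ⟫ ≤ 0} := by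
  ext ξ
  refine ⟨fun h => ⟨h.1, aux_sub hE hε hx h⟩, fun ⟨h1, h2⟩ => aux_char h1 fun δ hδ => ?_⟩
  have hc : Tendsto (fun t : ℝ => (‖ξ + t • v‖)⁻¹ • (ξ + t • v)) (𝓝[>] 0) (𝓝 ξ) := by
    have hb : Tendsto (fun t : ℝ => ξ + t • v) (𝓝[>] 0) (𝓝 ξ) := by
      have : Continuous (fun t : ℝ => ξ + t • v) := by fun_prop
      have h := this.tendsto 0
      simp only [zero_smul, add_zero] at h
      exact h.mono_left nhdsWithin_le_nhds
    have := (hb.norm.inv₀ (by simp [h1])).smul hb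
    simpa [h1] using this
  obtain ⟨t, ht, ht0⟩ := ((hc.eventually (ball_mem_nhds ξ hδ)).and self_mem_nhdsWithin).exists
  have ht0 : 0 < t := ht0
  obtain ⟨u, hu1, hu2, hu3⟩ := aux_strict hE hε hx (ξ + t • v) (fun y hy => by
    rw [inner_add_right, inner_smul_right]
    have := mul_pos ht0 (neg_pos.2 (hv y hy))
    linarith [h2 y hy]) δ hδ
  exact ⟨u, hu1, hu2, by rw [hu3]; exact ht⟩

lemma aux_nonempty {E : Set Plane} {ε : ℝ} 
    {x : Plane} (hx : x ∈ frontier (eNbhd E ε)) : (outwardDirs E ε x).Nonempty := by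
  have hcl : IsClosed (eNbhd E ε) := isClosed_closure
  have hxE : x ∈ eNbhd E ε := hcl.frontier_subset hx
  have hx2 : x ∈ closure (eNbhd E ε)ᶜ := by
    rw [closure_compl]; exact hx.2
  obtain ⟨u, hu, hux⟩ := mem_closure_iff_seq_limit.1 hx2
  have h1 : ∀ n, (‖u n - x‖)⁻¹ • (u n - x) ∈ sphere (0 : Plane) 1 := by
    intro n
    have : u n - x ≠ 0 := by
      intro h
      exact hu n (by rw [sub_eq_zero.1 h]; exact hxE)
    rw [mem_sphere_zero_iff_norm, norm_smul, norm_inv, norm_norm,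
      inv_mul_cancel₀ (norm_ne_zero_iff.2 this)]
  obtain ⟨ξ, hξ, φ, hφ, hl⟩ := (isCompact_sphere (0 : Plane) 1).tendsto_subseq h1
  exact ⟨ξ, mem_sphere_zero_iff_norm.1 hξ, u ∘ φ, fun n => hu _,
    hux.comp hφ.tendsto_atTop, hl⟩

lemma aux_inner (a b : Plane) : ⟪a, b⟫ = a 0 * b 0 + a 1 * b 1 := by
  simp [PiLp.inner_apply, Fin.sum_univ_two, mul_comm]

lemma aux_norm (a : Plane) : ‖a‖ ^ 2 = a 0 ^ 2 + a 1 ^ 2 := by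
  rw [← real_inner_self_eq_norm_sq, aux_inner]; ring

/-- The planar cross product. -/
def aux_cr (a b : Plane) : ℝ := a 0 * b 1 - a 1 * b 0

lemma aux_cr_zero {a b : Plane} (hab : ‖a‖ = ‖b‖) (h : aux_cr a b = 0) : a = b ∨ a = -b := by
  have h1 := aux_norm a
  have h2 := aux_norm b
  have h3 : ‖a - b‖ ^ 2 * ‖a + b‖ ^ 2 = 0 := by
    rw [aux_norm, aux_norm]
    simp only [PiLp.sub_apply, PiLp.add_apply]
    unfold aux_cr at h
    have h4 : a 0 ^ 2 + a 1 ^ 2 = b 0 ^ 2 + b 1 ^ 2 := by rw [← h1, ← h2, hab]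
    linear_combination (a 0 ^ 2 + a 1 ^ 2 - b 0 ^ 2 - b 1 ^ 2) * h4 +
      4 * (a 0 * b 1 - a 1 * b 0) * h
  rcases mul_eq_zero.1 h3 with h4 | h4
  · left; exact sub_eq_zero.1 (norm_eq_zero.1 (pow_eq_zero_iff two_ne_zero |>.1 h4))
  · right; exact eq_neg_of_add_eq_zero_left (norm_eq_zero.1 (pow_eq_zero_iff two_ne_zero |>.1 h4))

lemma aux_perp {c a b : Plane} (hc : c ≠ 0) (hab : ‖a‖ = ‖b‖) (h1 : ⟪c, a⟫ = 0)
    (h2 : ⟪c, b⟫ = 0) : a = b ∨ a = -b := by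
  apply aux_cr_zero hab
  rw [aux_inner] at h1 h2
  unfold aux_cr
  have h3 : ‖c‖ ^ 2 * (a 0 * b 1 - a 1 * b 0) = 0 := by
    rw [aux_norm]
    linear_combination (c 0 * b 1 - c 1 * b 0) * h1 + (c 1 * a 0 - c 0 * a 1) * h2
  have h4 : ‖c‖ ^ 2 ≠ 0 := pow_ne_zero _ (norm_ne_zero_iff.2 hc)
  exact (mul_eq_zero.1 h3).resolve_left h4

lemma aux_caseB {E : Set Plane} (hE : IsCompact E) {ε : ℝ} (hε : 0 < ε)
    {x : Plane} (hx : x ∈ frontier (eNbhd E ε))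
    (hno : ∀ v, ∃ y ∈ contributors E ε x, 0 ≤ ⟪y - x, v⟫) :
    ∃ ξ₁ ξ₂, ξ₁ ∈ extOutward E ε x ∧ ξ₂ ∈ extOutward E ε x ∧
        outwardDirs E ε x = arcSeg ξ₁ ξ₂ ∧ extOutward E ε x = {ξ₁, ξ₂} := by
  have hext : extOutward E ε x = outwardDirs E ε x := by
    ext ξ
    refine ⟨fun h => h.1, fun h => ⟨h, ?_⟩⟩
    obtain ⟨y, hy, h1⟩ := hno ξ
    exact ⟨y, hy, le_antisymm (aux_sub hE hε hx h y hy) h1⟩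
  rw [hext]
  obtain ⟨ξ, hξ⟩ := aux_nonempty hx
  have hpm : ∀ η ∈ outwardDirs E ε x, η = ξ ∨ η = -ξ := by
    intro η hη
    obtain ⟨y, hy, h1⟩ := hno (η + ξ)
    have h2 := aux_sub hE hε hx hη y hy
    have h3 := aux_sub hE hε hx hξ y hy
    rw [inner_add_right] at h1
    refine aux_perp (c := y - x) ?_ (hη.1.trans hξ.1.symm) (by linarith) (by linarith)
    rw [← norm_ne_zero_iff, hy.2]; exact hε.ne'
  have hscal : ∀ s : ℝ, ‖s • ξ‖ = 1 → s • ξ = ξ ∨ s • ξ = -ξ := by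
    intro s hs
    rw [norm_smul, hξ.1, mul_one, Real.norm_eq_abs] at hs
    rcases abs_eq (zero_le_one) |>.1 hs with h | h <;> simp [h]
  by_cases hneg : -ξ ∈ outwardDirs E ε x
  · have h1 : outwardDirs E ε x = {ξ, -ξ} := by
      ext η
      refine ⟨hpm η, ?_⟩
      rintro (rfl | rfl) <;> assumption
    refine ⟨ξ, -ξ, hξ, hneg, ?_, h1⟩
    rw [h1]
    ext η
    constructor
    · rintro (rfl | rfl)
      · exact ⟨hξ.1, 1, 0, by simp⟩
      · exact ⟨hneg.1, 0, 1, by simp⟩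
    · rintro ⟨hn, a, b, ha, hb, rfl⟩
      have h2 : a • ξ + b • -ξ = (a - b) • ξ := by module
      rw [h2] at hn ⊢
      exact hscal _ hn
  · have h1 : outwardDirs E ε x = {ξ} := by
      ext η
      constructor
      · intro h
        rcases hpm η h with h2 | h2
        · exact h2
        · exact absurd (h2 ▸ h) hneg
      · rintro rfl; exact hξ
    refine ⟨ξ, ξ, hξ, hξ, ?_, by simpa using h1⟩
    rw [h1]
    ext η
    constructor
    · rintro rfl
      exact ⟨hξ.1, 1, 0, by simp⟩
    · rintro ⟨hn, a, b, ha, hb, rfl⟩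
      have h2 : a • ξ + b • ξ = (a + b) • ξ := by module
      rw [h2] at hn ⊢
      rw [norm_smul, hξ.1, mul_one, Real.norm_of_nonneg (by linarith)] at hn
      simp [hn]

lemma aux_caseA {E : Set Plane} (hE : IsCompact E) {ε : ℝ} (hε : 0 < ε)
    {x : Plane} (hx : x ∈ frontier (eNbhd E ε)) (v : Plane)
    (hv : ∀ y ∈ contributors E ε x, ⟪y - x, v⟫ < 0)
    (h2 : ∃ y₁ ∈ contributors E ε x, ∃ y₂ ∈ contributors E ε x, y₁ ≠ y₂) :
    ∃ ξ₁ ξ₂, ξ₁ ∈ extOutward E ε x ∧ ξ₂ ∈ extOutward E ε x ∧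
        outwardDirs E ε x = arcSeg ξ₁ ξ₂ ∧ extOutward E ε x = {ξ₁, ξ₂} := by
  have hcomp : IsCompact (contributors E ε x) := by
    have : contributors E ε x = E ∩ {y | ‖y - x‖ = ε} := by
      ext y; exact aux_contrib hE hε hx y
    rw [this]
    exact hE.inter_right (isClosed_eq (by fun_prop) continuous_const)
  have hne : (contributors E ε x).Nonempty := ⟨_, h2.choose_spec.1⟩
  have hcont : ContinuousOn (fun y : Plane => aux_cr v (y - x) / ⟪y - x, v⟫)
      (contributors E ε x) := by
    apply ContinuousOn.div
    · unfold aux_cr; fun_prop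
    · fun_prop
    · exact fun y hy => (hv y hy).ne
  have hv0 : 0 < ‖v‖ ^ 2 := by
    obtain ⟨y, hy⟩ := hne
    have : v ≠ 0 := by rintro rfl; simpa using hv y hy
    positivity
  have hkey : ∀ y ∈ contributors E ε x, ∀ z ∈ contributors E ε x,
      aux_cr v (y - x) / ⟪y - x, v⟫ ≤ aux_cr v (z - x) / ⟪z - x, v⟫ →
      0 ≤ aux_cr (y - x) (z - x) := by
    intro y hy z hz h
    have hy' := hv y hy
    have hz' := hv z hz
    have h3 := mul_le_mul_of_nonneg_right h (mul_pos_of_neg_of_neg hy' hz').le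
    have e1 : aux_cr v (y - x) / ⟪y - x, v⟫ * (⟪y - x, v⟫ * ⟪z - x, v⟫) =
      aux_cr v (y - x) * ⟪z - x, v⟫ := by field_simp [hy'.ne]
    have e2 : aux_cr v (z - x) / ⟪z - x, v⟫ * (⟪y - x, v⟫ * ⟪z - x, v⟫) =
      aux_cr v (z - x) * ⟪y - x, v⟫ := by field_simp [hz'.ne]
    rw [e1, e2] at h3
    have h4 : ‖v‖ ^ 2 * aux_cr (y - x) (z - x) =
        aux_cr v (z - x) * ⟪y - x, v⟫ - aux_cr v (y - x) * ⟪z - x, v⟫ := by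
      rw [aux_norm, aux_inner, aux_inner]; unfold aux_cr; ring
    have h5 : 0 ≤ ‖v‖ ^ 2 * aux_cr (y - x) (z - x) := by linarith
    exact nonneg_of_mul_nonneg_right h5 hv0
  obtain ⟨p, hp, hpm⟩ := hcomp.exists_isMinOn hne hcont
  obtain ⟨q, hq, hqm⟩ := hcomp.exists_isMaxOn hne hcont
  have hP : ∀ y ∈ contributors E ε x, 0 ≤ aux_cr (p - x) (y - x) :=
    fun y hy => hkey p hp y hy (hpm hy)
  have hQ : ∀ y ∈ contributors E ε x, 0 ≤ aux_cr (y - x) (q - x) :=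
    fun y hy => hkey y hy q hq (hqm hy)
  have hinj : ∀ y ∈ contributors E ε x, ∀ z ∈ contributors E ε x,
      aux_cr (y - x) (z - x) = 0 → y = z := by
    intro y hy z hz h
    rcases aux_cr_zero (hy.2.trans hz.2.symm) h with h3 | h3
    · exact sub_left_injective h3
    · have h4 := hv y hy
      have h5 := hv z hz
      rw [h3, inner_neg_left] at h4
      linarith
  have hpq : 0 < aux_cr (p - x) (q - x) := by
    refine lt_of_le_of_ne (hP q hq) fun h => ?_
    have h3 : p = q := hinj p hp q hq h.symm
    subst h3
    have h4 : ∀ y ∈ contributors E ε x, y = p := fun y hy => by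
      refine hinj y hy p hp (le_antisymm ?_ (hQ y hy))
      have := hP y hy
      unfold aux_cr at this ⊢
      linarith
    obtain ⟨y₁, hy₁, y₂, hy₂, hn⟩ := h2
    exact hn ((h4 _ hy₁).trans (h4 _ hy₂).symm)
  set ξ₁ : Plane := !₂[(p - x) 1 / ε, -(p - x) 0 / ε] with hξ₁
  set ξ₂ : Plane := !₂[-(q - x) 1 / ε, (q - x) 0 / ε] with hξ₂
  have i1 : ∀ c : Plane, ⟪c, ξ₁⟫ = - aux_cr (p - x) c / ε := by
    intro c
    rw [aux_inner, hξ₁]; unfold aux_cr; simp; ring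
  have i2 : ∀ c : Plane, ⟪c, ξ₂⟫ = - aux_cr c (q - x) / ε := by
    intro c
    rw [aux_inner, hξ₂]; unfold aux_cr; simp; ring
  have n1 : ‖ξ₁‖ = 1 := by
    have h3 := aux_norm ξ₁
    have h4 := aux_norm (p - x)
    rw [hp.2] at h4
    have h5 : ‖ξ₁‖ ^ 2 = 1 := by
      rw [h3, hξ₁]
      simp only [Matrix.cons_val_zero, Matrix.cons_val_one, Matrix.cons_val_fin_one]
      field_simp
      linarith
    exact (pow_eq_one_iff_of_nonneg (norm_nonneg ξ₁) two_ne_zero).1 h5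
  have n2 : ‖ξ₂‖ = 1 := by
    have h3 := aux_norm ξ₂
    have h4 := aux_norm (q - x)
    rw [hq.2] at h4
    have h5 : ‖ξ₂‖ ^ 2 = 1 := by
      rw [h3, hξ₂]
      simp only [Matrix.cons_val_zero, Matrix.cons_val_one, Matrix.cons_val_fin_one]
      field_simp
      linarith
    exact (pow_eq_one_iff_of_nonneg (norm_nonneg ξ₂) two_ne_zero).1 h5
  have le1 : ∀ y ∈ contributors E ε x, ⟪y - x, ξ₁⟫ ≤ 0 := fun y hy => by
    rw [i1]; exact div_nonpos_of_nonpos_of_nonneg (neg_nonpos.2 (hP y hy)) hε.le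
  have le2 : ∀ y ∈ contributors E ε x, ⟪y - x, ξ₂⟫ ≤ 0 := fun y hy => by
    rw [i2]; exact div_nonpos_of_nonpos_of_nonneg (neg_nonpos.2 (hQ y hy)) hε.le
  have heq := aux_eq hE hε hx v hv
  have m1 : ξ₁ ∈ extOutward E ε x := by
    refine ⟨by rw [heq]; exact ⟨n1, le1⟩, p, hp, ?_⟩
    rw [i1]; unfold aux_cr; ring
  have m2 : ξ₂ ∈ extOutward E ε x := by
    refine ⟨by rw [heq]; exact ⟨n2, le2⟩, q, hq, ?_⟩
    rw [i2]; unfold aux_cr; ring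
  have harc : outwardDirs E ε x = arcSeg ξ₁ ξ₂ := by
    rw [heq]
    ext ξ
    constructor
    · rintro ⟨h3, h4⟩
      refine ⟨h3, ε * (-⟪q - x, ξ⟫) / aux_cr (p - x) (q - x),
        ε * (-⟪p - x, ξ⟫) / aux_cr (p - x) (q - x), ?_, ?_, ?_⟩
      · exact div_nonneg (mul_nonneg hε.le (neg_nonneg.2 (h4 q hq))) hpq.le
      · exact div_nonneg (mul_nonneg hε.le (neg_nonneg.2 (h4 p hp))) hpq.le
      · have hd := hpq.ne'
        rw [aux_inner, aux_inner]
        ext i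
        fin_cases i
        · simp only [hξ₁, hξ₂, PiLp.add_apply, PiLp.smul_apply, smul_eq_mul, Fin.zero_eta,
            Matrix.cons_val_zero]
          field_simp
          unfold aux_cr
          ring
        · simp only [hξ₁, hξ₂, PiLp.add_apply, PiLp.smul_apply, smul_eq_mul, Fin.mk_one,
            Matrix.cons_val_one, Matrix.cons_val_fin_one]
          field_simp
          unfold aux_cr
          ring
    · rintro ⟨h3, a, b, ha, hb, rfl⟩
      refine ⟨h3, fun y hy => ?_⟩
      rw [inner_add_right, inner_smul_right, inner_smul_right]
      nlinarith [mul_nonneg ha (neg_nonneg.2 (le1 y hy)), mul_nonneg hb (neg_nonneg.2 (le2 y hy))]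
  refine ⟨ξ₁, ξ₂, m1, m2, harc, ?_⟩
  ext ξ
  constructor
  · rintro ⟨h3, y, hy, h4⟩
    rw [harc] at h3
    obtain ⟨h3, a, b, ha, hb, rfl⟩ := h3
    rw [inner_add_right, inner_smul_right, inner_smul_right] at h4
    have u1 := mul_nonneg ha (neg_nonneg.2 (le1 y hy))
    have u2 := mul_nonneg hb (neg_nonneg.2 (le2 y hy))
    have w1 : a * ⟪y - x, ξ₁⟫ = 0 := by linarith
    have w2 : b * ⟪y - x, ξ₂⟫ = 0 := by linarith
    by_cases ha0 : a = 0
    · right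
      subst ha0
      rw [zero_smul, zero_add, norm_smul, n2, mul_one, Real.norm_of_nonneg hb] at h3
      simp [h3]
    by_cases hb0 : b = 0
    · left
      subst hb0
      rw [zero_smul, add_zero, norm_smul, n1, mul_one, Real.norm_of_nonneg ha] at h3
      simp [h3]
    exfalso
    have w1 := (mul_eq_zero.1 w1).resolve_left ha0
    have w2 := (mul_eq_zero.1 w2).resolve_left hb0
    rw [i1, div_eq_zero_iff, or_iff_left hε.ne', neg_eq_zero] at w1
    rw [i2, div_eq_zero_iff, or_iff_left hε.ne', neg_eq_zero] at w2
    have e1 := hinj _ hp _ hy w1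
    have e2 := hinj _ hy _ hq w2
    rw [e1, e2] at hpq
    unfold aux_cr at hpq
    linarith
  · rintro (rfl | rfl) <;> assumption

/-- Structure of sets of outward directions: (i) if `x` has a unique contributor `y`, the
outward directions are exactly the unit vectors with `⟪y - x, ξ⟫ ≤ 0`; (ii) if `x` has at
least two contributors, the outward directions form a geodesic arc-segment `[ξ₁, ξ₂]`
between the only two extremal outward directions (possibly `ξ₁ = ξ₂`). -/
theorem structure_of_outwardDirs (E : Set Plane) (hE : IsCompact E) {ε : ℝ} (hε : 0 < ε)
    (x : Plane) (hx : x ∈ frontier (eNbhd E ε)) :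
    (∀ y, contributors E ε x = {y} →
      outwardDirs E ε x = {ξ : Plane | ‖ξ‖ = 1 ∧ ⟪y - x, ξ⟫ ≤ 0}) ∧
    ((∃ y₁ ∈ contributors E ε x, ∃ y₂ ∈ contributors E ε x, y₁ ≠ y₂) →
      ∃ ξ₁ ξ₂, ξ₁ ∈ extOutward E ε x ∧ ξ₂ ∈ extOutward E ε x ∧
        outwardDirs E ε x = arcSeg ξ₁ ξ₂ ∧ extOutward E ε x = {ξ₁, ξ₂}) := by
  constructor
  · intro y hy
    have hyc : y ∈ contributors E ε x := by rw [hy]; rfl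
    rw [aux_eq hE hε hx (-(y - x)) ?_]
    · ext ξ; simp [hy]
    · intro z hz
      rw [hy] at hz
      obtain rfl : z = y := hz
      rw [inner_neg_right, real_inner_self_eq_norm_sq, hyc.2]
      exact neg_neg_of_pos (by positivity)
  · intro h2
    by_cases h : ∃ v, ∀ y ∈ contributors E ε x, ⟪y - x, v⟫ < 0
    · obtain ⟨v, hv⟩ := h
      exact aux_caseA hE hε hx v hv h2
    · push Not at h
      exact aux_caseB hE hε hx h


end
end

section
/- Let E ⊆ ℝ² be compact, ε > 0, and x ∈ ∂E_ε. Then T_x(E_ε) = Ξ_ext(x): the set of unit tangent vectors of E_ε at x coincides with the set of extremal outward directions at x. -/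
open Metric Set Filter Topology RealInnerProductSpace

noncomputable section

/-- The set of unit tangent vectors of `E_ε` at `x`: unit vectors arising as limits of
normalised directions of sequences of boundary points converging to `x`. -/
def tangentSet (E : Set Plane) (ε : ℝ) (x : Plane) : Set Plane :=
  {v | ‖v‖ = 1 ∧ ∃ u : ℕ → Plane, (∀ n, u n ∈ frontier (eNbhd E ε)) ∧ (∀ n, u n ≠ x) ∧
    Tendsto u atTop (nhds x) ∧
    Tendsto (fun n => (‖u n - x‖)⁻¹ • (u n - x)) atTop (nhds v)}

lemma dir_perturb {x ξ : Plane} (hξ : ‖ξ‖ = 1) {u w : ℕ → Plane} {δ : ℕ → ℝ}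
    (hne : ∀ n, u n ≠ x) (hu : Tendsto u atTop (nhds x))
    (hd : Tendsto (fun n => (‖u n - x‖)⁻¹ • (u n - x)) atTop (nhds ξ))
    (hw : ∀ n, ‖w n - u n‖ ≤ δ n * ‖u n - x‖) (hδ : Tendsto δ atTop (nhds 0)) :
    Tendsto w atTop (nhds x) ∧ (∀ᶠ n in atTop, w n ≠ x) ∧
    Tendsto (fun n => (‖w n - x‖)⁻¹ • (w n - x)) atTop (nhds ξ) := by
  have hpos : ∀ n, 0 < ‖u n - x‖ := fun n => norm_pos_iff.2 (sub_ne_zero.2 (hne n))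
  have hux : Tendsto (fun n => ‖u n - x‖) atTop (nhds 0) :=
    tendsto_iff_norm_sub_tendsto_zero.1 hu
  have h1 : Tendsto (fun n => w n - u n) atTop (nhds 0) := by
    apply squeeze_zero_norm hw
    simpa using hδ.mul hux
  have h2 : Tendsto (fun n => (‖u n - x‖)⁻¹ • (w n - u n)) atTop (nhds 0) := by
    apply squeeze_zero_norm _ hδ
    intro n
    rw [norm_smul, norm_inv, norm_norm, inv_mul_le_iff₀ (hpos n), mul_comm]
    exact hw n
  have h3 : Tendsto (fun n => (‖u n - x‖)⁻¹ • (w n - x)) atTop (nhds ξ) := by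
    have := hd.add h2
    rw [add_zero] at this
    refine this.congr fun n => ?_
    rw [← smul_add]; congr 1; abel
  have h4 : Tendsto (fun n => ‖(‖u n - x‖)⁻¹ • (w n - x)‖) atTop (nhds 1) := by
    rw [← hξ]; exact h3.norm
  refine ⟨?_, ?_, ?_⟩
  · simpa using h1.add hu
  · filter_upwards [h4.eventually (lt_mem_nhds (zero_lt_one))] with n hn h
    simp [h] at hn
  · have := (h4.inv₀ one_ne_zero).smul h3
    rw [inv_one, one_smul] at this
    refine this.congr fun n => ?_
    rw [norm_smul, norm_inv, norm_norm, smul_smul]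
    congr 1
    have := (hpos n).ne'
    field_simp

lemma eNbhd_eq (E : Set Plane) {ε : ℝ} (hε : 0 < ε) : eNbhd E ε = cthickening ε E := by
  rw [eNbhd, ← thickening_eq_biUnion_ball, closure_thickening hε]

lemma le_norm_of_frontier {E : Set Plane} {ε : ℝ} {z y : Plane}
    (hz : z ∈ frontier (eNbhd E ε)) (hy : y ∈ E) : ε ≤ ‖y - z‖ := by
  by_contra! h
  apply hz.2
  have : ball y ε ⊆ interior (eNbhd E ε) :=
    interior_maximal (fun a ha => subset_closure (mem_biUnion hy ha)) isOpen_ball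
  exact this (by rwa [mem_ball, dist_comm, dist_eq_norm])

lemma exists_contrib {E : Set Plane} (hE : IsCompact E) {ε : ℝ} (hε : 0 < ε) {z : Plane}
    (hz : z ∈ frontier (eNbhd E ε)) : ∃ y ∈ E, ‖y - z‖ = ε := by
  have h1 : z ∈ eNbhd E ε := isClosed_closure.frontier_subset hz
  rw [eNbhd_eq E hε, hE.cthickening_eq_biUnion_closedBall hε.le] at h1
  obtain ⟨y, hy, h⟩ := mem_iUnion₂.1 h1
  refine ⟨y, hy, le_antisymm ?_ (le_norm_of_frontier hz hy)⟩
  rwa [mem_closedBall, dist_comm, dist_eq_norm] at h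

lemma mem_contrib {E : Set Plane} {ε : ℝ} (hε : 0 < ε) {z y : Plane}
    (hz : z ∈ frontier (eNbhd E ε)) (hy : y ∈ E) (h : ‖y - z‖ = ε) :
    y ∈ contributors E ε z := by
  refine ⟨⟨subset_closure hy, fun hi => ?_⟩, h⟩
  obtain ⟨r, hr, hb⟩ := Metric.isOpen_iff.1 isOpen_interior y hi
  -- move from `y` towards `z`
  set s : ℝ := min (1 / 2) (r / (2 * ε)) with hs
  have hs0 : 0 < s := by positivity
  have hs1 : s ≤ 1 / 2 := min_le_left _ _
  have hs2 : s * ε < r := by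
    have : s ≤ r / (2 * ε) := min_le_right _ _
    calc s * ε ≤ r / (2 * ε) * ε := by gcongr
      _ = r / 2 := by field_simp
      _ < r := by linarith
  have hm : y + s • (z - y) ∈ E := by
    apply interior_subset (hb _)
    rw [mem_ball, dist_eq_norm, add_sub_cancel_left, norm_smul, norm_sub_rev, h,
      Real.norm_of_nonneg hs0.le]
    exact hs2
  have := le_norm_of_frontier hz hm
  have e : y + s • (z - y) - z = (1 - s) • (y - z) := by module
  rw [e, norm_smul, h, Real.norm_of_nonneg (by linarith)] at this
  nlinarith

/-- Extremal outward directions coincide with tangents. -/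
theorem tangentSet_eq_extOutward (E : Set Plane) (hE : IsCompact E) {ε : ℝ} (hε : 0 < ε)
    (x : Plane) (hx : x ∈ frontier (eNbhd E ε)) :
    tangentSet E ε x = extOutward E ε x := by
  have hxmem : x ∈ eNbhd E ε := isClosed_closure.frontier_subset hx
  ext v
  constructor
  · rintro ⟨hv, u, huf, hne, hu, hd⟩
    have hux : Tendsto (fun n => ‖u n - x‖) atTop (nhds 0) :=
      tendsto_iff_norm_sub_tendsto_zero.1 hu
    have hpos : ∀ n, 0 < ‖u n - x‖ := fun n => norm_pos_iff.2 (sub_ne_zero.2 (hne n))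
    refine ⟨⟨hv, ?_⟩, ?_⟩
    · have : ∀ n : ℕ, ∃ w, w ∉ eNbhd E ε ∧ ‖w - u n‖ ≤ (1 / ((n : ℝ) + 1)) * ‖u n - x‖ := by
        intro n
        have h1 : u n ∈ closure (eNbhd E ε)ᶜ := by
          rw [closure_compl]; exact (huf n).2
        obtain ⟨w, hw, h⟩ := Metric.mem_closure_iff.1 h1 ((1 / ((n : ℝ) + 1)) * ‖u n - x‖)
          (mul_pos (by positivity) (hpos n))
        refine ⟨w, hw, ?_⟩
        rw [dist_comm, dist_eq_norm] at h
        exact h.le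
      choose w hw1 hw2 using this
      obtain ⟨a, -, c⟩ := dir_perturb hv hne hu hd hw2 tendsto_one_div_add_atTop_nhds_zero_nat
      exact ⟨w, hw1, a, c⟩
    · choose y hyE hy using fun n => exists_contrib hE hε (huf n)
      obtain ⟨y0, hy0, φ, hφ, hlim⟩ := hE.tendsto_subseq hyE
      have hφ' := hφ.tendsto_atTop
      have hyu : Tendsto (fun n => y (φ n) - u (φ n)) atTop (nhds (y0 - x)) :=
        hlim.sub (hu.comp hφ')
      have hn : ‖y0 - x‖ = ε := by
        refine tendsto_nhds_unique hyu.norm ?_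
        simp [hy]
      refine ⟨y0, mem_contrib hε hx hy0 hn, le_antisymm ?_ ?_⟩
      · have hl : Tendsto (fun n => 2 * ⟪y0 - x, (‖u n - x‖)⁻¹ • (u n - x)⟫ - ‖u n - x‖)
            atTop (nhds (2 * ⟪y0 - x, v⟫ - 0)) :=
          ((tendsto_const_nhds.inner hd).const_mul 2).sub hux
        have : 2 * ⟪y0 - x, v⟫ - 0 ≤ 0 := by
          refine le_of_tendsto' hl fun n => ?_
          have h1 := le_norm_of_frontier (huf n) hy0
          have h2 : ‖y0 - u n‖ ^ 2 = ‖y0 - x‖ ^ 2 - 2 * ⟪y0 - x, u n - x⟫ + ‖u n - x‖ ^ 2 := by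
            rw [← norm_sub_sq_real]; congr 2; abel
          have h3 : 2 * ⟪y0 - x, u n - x⟫ ≤ ‖u n - x‖ ^ 2 := by
            rw [hn] at h2; nlinarith
          rw [inner_smul_right]
          have h4 : (‖u n - x‖)⁻¹ * (2 * ⟪y0 - x, u n - x⟫) ≤ ‖u n - x‖ := by
            rw [inv_mul_le_iff₀ (hpos n)]; nlinarith
          linarith
        linarith
      · have hl : Tendsto (fun n => 2 * ⟪y (φ n) - u (φ n),
            (‖u (φ n) - x‖)⁻¹ • (u (φ n) - x)⟫ + ‖u (φ n) - x‖)
            atTop (nhds (2 * ⟪y0 - x, v⟫ + 0)) :=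
          ((hyu.inner (hd.comp hφ')).const_mul 2).add (hux.comp hφ')
        have : 0 ≤ 2 * ⟪y0 - x, v⟫ + 0 := by
          refine ge_of_tendsto' hl fun k => ?_
          generalize φ k = n
          have h1 := le_norm_of_frontier hx (hyE n)
          have h2 : ‖y n - x‖ ^ 2 =
              ‖y n - u n‖ ^ 2 + 2 * ⟪y n - u n, u n - x⟫ + ‖u n - x‖ ^ 2 := by
            rw [← norm_add_sq_real]; congr 2; abel
          have h3 : -(2 * ⟪y n - u n, u n - x⟫) ≤ ‖u n - x‖ ^ 2 := by
            rw [hy n] at h2; nlinarith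
          rw [inner_smul_right]
          have h4 : (‖u n - x‖)⁻¹ * (-(2 * ⟪y n - u n, u n - x⟫)) ≤ ‖u n - x‖ := by
            rw [inv_mul_le_iff₀ (hpos n)]; nlinarith
          linarith
        linarith
  · rintro ⟨⟨hv, u, huo, hu, hd⟩, y, hy, horth⟩
    have hne : ∀ n, u n ≠ x := fun n h => huo n (h ▸ hxmem)
    have hux : Tendsto (fun n => ‖u n - x‖) atTop (nhds 0) :=
      tendsto_iff_norm_sub_tendsto_zero.1 hu
    have hpos : ∀ n, 0 < ‖u n - x‖ := fun n => norm_pos_iff.2 (sub_ne_zero.2 (hne n))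
    have hyE : y ∈ E := hE.isClosed.frontier_subset hy.1
    have hcb : closedBall y ε ⊆ eNbhd E ε := by
      rw [eNbhd_eq E hε]; exact closedBall_subset_cthickening hyE ε
    have hdist : ∀ n, ε < ‖u n - y‖ := by
      intro n
      by_contra! h
      exact huo n (hcb (by rwa [mem_closedBall, dist_eq_norm]))
    have hb : ∀ n, ∃ b ∈ frontier (eNbhd E ε), ‖b - u n‖ ≤ ‖u n - y‖ - ε := by
      intro n
      have hD : 0 < ‖u n - y‖ := hε.trans (hdist n)
      set p : Plane := y + (ε / ‖u n - y‖) • (u n - y) with hp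
      have hpm : p ∈ eNbhd E ε := by
        apply hcb
        rw [mem_closedBall, dist_eq_norm, hp, add_sub_cancel_left, norm_smul,
          Real.norm_of_nonneg (by positivity), div_mul_cancel₀ _ hD.ne']
      have hpu : ‖p - u n‖ = ‖u n - y‖ - ε := by
        have e : p - u n = -((1 - ε / ‖u n - y‖) • (u n - y)) := by rw [hp]; module
        rw [e, norm_neg, norm_smul, Real.norm_of_nonneg, sub_mul, div_mul_cancel₀ _ hD.ne',
          one_mul]
        rw [sub_nonneg, div_le_one hD]; exact (hdist n).le
      have hseg : IsPreconnected (segment ℝ p (u n)) := (convex_segment _ _).isPreconnected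
      obtain ⟨b, hbs, hbf⟩ : (segment ℝ p (u n) ∩ frontier (eNbhd E ε)).Nonempty := by
        by_contra hcon
        have hint : ∀ z ∈ segment ℝ p (u n), z ∈ eNbhd E ε → z ∈ interior (eNbhd E ε) := by
          intro z hz hzm
          by_contra hzi
          exact hcon ⟨z, hz, subset_closure hzm, hzi⟩
        obtain ⟨z, -, hz1, hz2⟩ := hseg (interior (eNbhd E ε)) (eNbhd E ε)ᶜ isOpen_interior
          isClosed_closure.isOpen_compl
          (fun z hz => (em (z ∈ eNbhd E ε)).imp (hint z hz) id)
          ⟨p, left_mem_segment ℝ _ _, hint p (left_mem_segment ℝ _ _) hpm⟩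
          ⟨u n, right_mem_segment ℝ _ _, huo n⟩
        exact hz2 (interior_subset hz1)
      refine ⟨b, hbf, ?_⟩
      have : segment ℝ p (u n) ⊆ closedBall (u n) (‖u n - y‖ - ε) := by
        apply (convex_closedBall _ _).segment_subset
        · rw [mem_closedBall, dist_eq_norm, hpu]
        · exact mem_closedBall_self (by linarith [hdist n])
      have := this hbs
      rwa [mem_closedBall, dist_eq_norm] at this
    choose b hbf hbd using hb
    have hδ : Tendsto (fun n => (‖u n - x‖ - 2 * ⟪y - x, (‖u n - x‖)⁻¹ • (u n - x)⟫) / ε)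
        atTop (nhds 0) := by
      have := (hux.sub ((tendsto_const_nhds (x := y - x)).inner hd |>.const_mul 2)).div_const ε
      rw [horth] at this
      simpa using this
    have hw : ∀ n, ‖b n - u n‖ ≤
        ((‖u n - x‖ - 2 * ⟪y - x, (‖u n - x‖)⁻¹ • (u n - x)⟫) / ε) * ‖u n - x‖ := by
      intro n
      refine (hbd n).trans ?_
      have h2 : ‖u n - y‖ ^ 2 = ‖y - x‖ ^ 2 - 2 * ⟪y - x, u n - x⟫ + ‖u n - x‖ ^ 2 := by
        rw [← norm_sub_sq_real, norm_sub_rev (u n) y]; congr 2; abel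
      rw [hy.2] at h2
      have e : ((‖u n - x‖ - 2 * ⟪y - x, (‖u n - x‖)⁻¹ • (u n - x)⟫) / ε) * ‖u n - x‖
          = (‖u n - x‖ ^ 2 - 2 * ⟪y - x, u n - x⟫) / ε := by
        rw [inner_smul_right]
        have := (hpos n).ne'
        field_simp
      rw [e, le_div_iff₀ hε]
      nlinarith [hdist n]
    obtain ⟨h1, h2, h3⟩ := dir_perturb hv hne hu hd hw hδ
    obtain ⟨N, hN⟩ := eventually_atTop.1 h2
    exact ⟨hv, fun n => b (n + N), fun n => hbf _, fun n => hN _ (Nat.le_add_left _ _),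
      h1.comp (tendsto_add_atTop_nat N), h3.comp (tendsto_add_atTop_nat N)⟩

end
end

section
/- Let E ⊆ ℝ² be compact, ε > 0, and x ∈ ∂E_ε. Then there exists r > 0 such that for each extremal pair (ξ, y) ∈ P_ext(x) there are a continuous function f^{ξ,y} : [0, ε/2] → ℝ, Lipschitz with constant 1/(√3·ε) on [0, r], and a closed set A_{ξ,y} ⊆ [0, ε/2], such that, writing g_{ξ,y}(s) := x + s·ξ + f^{ξ,y}(s)·(x − y), the map g_{ξ,y} is Lipschitz with constant 2/√3 on [0, r] and ∂E_ε ∩ closed-ball(x, r) = ⋃_{(ξ,y) ∈ P_ext(x)} g_{ξ,y}(A_{ξ,y}). Moreover, each A_{ξ,y} is either (a) an interval [0, s_{ξ,y}] with 0 < s_{ξ,y} ≤ ε/2, or (b) a closed set whose complement in [0, ε/2] contains a sequence of pairwise disjoint open intervals accumulating at 0; and if x is a wedge or x ∈ Unp(E), then case (a) holds for every extremal pair. -/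
open Metric Set Filter Topology RealInnerProductSpace

noncomputable section

lemma mem_eNbhd {E : Set Plane} (hE : IsCompact E) {ε : ℝ} (hε : 0 < ε) (z : Plane) :
    z ∈ eNbhd E ε ↔ ∃ e ∈ E, ‖e - z‖ ≤ ε := by
  rw [eNbhd_eq E hε, hE.cthickening_eq_biUnion_closedBall hε.le]
  simp only [mem_iUnion, mem_closedBall, exists_prop, dist_eq_norm, norm_sub_rev z]

lemma frontier_eNbhd_ge {E : Set Plane} {ε : ℝ} {z : Plane}
    (hz : z ∈ frontier (eNbhd E ε)) : ∀ e ∈ E, ε ≤ ‖e - z‖ := by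
  intro e he
  by_contra! h
  have h1 : z ∈ interior (eNbhd E ε) := by
    refine mem_interior.2 ⟨ball e ε, ?_, isOpen_ball, ?_⟩
    · intro w hw
      exact subset_closure (mem_biUnion he hw)
    · rw [mem_ball, dist_eq_norm, norm_sub_rev]; exact h
  exact hz.2 h1

lemma isClosed_eNbhd (E : Set Plane) (ε : ℝ) : IsClosed (eNbhd E ε) := isClosed_closure

lemma frontier_eNbhd_ex {E : Set Plane} (hE : IsCompact E) {ε : ℝ} (hε : 0 < ε) {z : Plane}
    (hz : z ∈ frontier (eNbhd E ε)) : ∃ e ∈ E, ‖e - z‖ = ε := by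
  have h1 : z ∈ eNbhd E ε := (isClosed_eNbhd E ε).frontier_subset hz
  obtain ⟨e, he, h⟩ := (mem_eNbhd hE hε z).1 h1
  exact ⟨e, he, le_antisymm h (frontier_eNbhd_ge hz e he)⟩

lemma mem_contributors {E : Set Plane} (hE : IsCompact E) {ε : ℝ} (hε : 0 < ε) {x : Plane}
    (hx : x ∈ frontier (eNbhd E ε)) {e : Plane} :
    e ∈ contributors E ε x ↔ e ∈ E ∧ ‖e - x‖ = ε := by
  constructor
  · rintro ⟨h1, h2⟩
    exact ⟨hE.isClosed.frontier_subset h1, h2⟩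
  · rintro ⟨h1, h2⟩
    refine ⟨⟨subset_closure h1, ?_⟩, h2⟩
    intro hzint
    have hc : Continuous (fun t : ℝ => e + t • (x - e)) := by fun_prop
    have h3 : ∀ᶠ t in 𝓝 (0:ℝ), e + t • (x - e) ∈ E := by
      have : Tendsto (fun t : ℝ => e + t • (x - e)) (𝓝 0) (𝓝 e) := by
        simpa using hc.tendsto 0
      exact this.eventually (mem_interior_iff_mem_nhds.1 hzint)
    obtain ⟨δ, hδ, h4⟩ := Metric.eventually_nhds_iff.1 h3
    set t := min (δ / 2) (1 / 2) with ht
    have ht0 : 0 < t := by positivity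
    have ht1 : t ≤ 1 / 2 := min_le_right _ _
    have ht2 : t < δ := lt_of_le_of_lt (min_le_left _ _) (by linarith)
    have h5 := frontier_eNbhd_ge hx _ (h4 (y := t) (by rw [Real.dist_eq, sub_zero, abs_of_pos ht0]; exact ht2))
    have h6 : e + t • (x - e) - x = (1 - t) • (e - x) := by module
    rw [h6, norm_smul, h2, Real.norm_eq_abs, abs_of_pos (by linarith)] at h5
    nlinarith

lemma outward_le {E : Set Plane} (hE : IsCompact E) {ε : ℝ} (hε : 0 < ε) {x ξ e : Plane}
    (hξ : ξ ∈ outwardDirs E ε x) (he : e ∈ E) (hex : ‖e - x‖ = ε) : ⟪e - x, ξ⟫ ≤ 0 := by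
  obtain ⟨_, u, hu, hux, huξ⟩ := hξ
  have h1 : Tendsto (fun n => ⟪e - x, (‖u n - x‖)⁻¹ • (u n - x)⟫) atTop (𝓝 ⟪e - x, ξ⟫) :=
    tendsto_const_nhds.inner huξ
  have h2 : Tendsto (fun n => ‖u n - x‖ / 2) atTop (𝓝 0) := by
    have : Tendsto (fun n => ‖u n - x‖ / 2) atTop (𝓝 (‖x - x‖ / 2)) :=
      ((hux.sub_const x).norm).div_const 2
    simpa using this
  refine le_of_tendsto_of_tendsto' h1 h2 ?_
  intro n
  have h3 : ε < ‖e - u n‖ := by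
    by_contra! h
    exact hu n ((mem_eNbhd hE hε _).2 ⟨e, he, h⟩)
  have h4 : ‖e - u n‖ ^ 2 = ‖e - x‖ ^ 2 - 2 * ⟪e - x, u n - x⟫ + ‖u n - x‖ ^ 2 := by
    rw [← norm_sub_sq_real]; congr 2; abel
  have h5 : 2 * ⟪e - x, u n - x⟫ ≤ ‖u n - x‖ ^ 2 := by
    rw [hex] at h4; nlinarith
  rw [inner_smul_right]
  rcases (norm_nonneg (u n - x)).eq_or_lt with h | h
  · rw [← h]; simp
  · rw [inv_mul_le_iff₀ h]; nlinarith

lemma frame {ξ n : Plane} (hξ : ‖ξ‖ = 1) (hn : ‖n‖ = 1) (h : ⟪n, ξ⟫ = 0) (v : Plane) :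
    v = ⟪v, ξ⟫ • ξ + ⟪v, n⟫ • n := by
  have h1 : ξ 0 ^ 2 + ξ 1 ^ 2 = 1 := by
    have := EuclideanSpace.real_norm_sq_eq ξ
    rw [hξ] at this; simp [Fin.sum_univ_two] at this; linarith
  have h2 : n 0 ^ 2 + n 1 ^ 2 = 1 := by
    have := EuclideanSpace.real_norm_sq_eq n
    rw [hn] at this; simp [Fin.sum_univ_two] at this; linarith
  have h3 : ξ 0 * n 0 + ξ 1 * n 1 = 0 := by
    simpa [PiLp.inner_apply, Fin.sum_univ_two] using h
  obtain ⟨D, hD⟩ : ∃ D, D = ξ 0 * n 1 - ξ 1 * n 0 := ⟨_, rfl⟩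
  have h4 : n 0 = - ξ 1 * D := by rw [hD]; linear_combination (-n 0) * h1 + (ξ 0) * h3
  have h5 : n 1 = ξ 0 * D := by rw [hD]; linear_combination (-n 1) * h1 + (ξ 1) * h3
  have h6 : D ^ 2 = 1 := by
    rw [h4, h5] at h2; linear_combination h2 - D ^ 2 * h1
  ext i
  fin_cases i
  · simp [PiLp.inner_apply, Fin.sum_univ_two, h4, h5]
    linear_combination (-v 0) * h1 +(-(ξ 1 ^ 2 * v 0 - ξ 0 * ξ 1 * v 1)) * h6
  · simp [PiLp.inner_apply, Fin.sum_univ_two, h4, h5]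
    linear_combination (-v 1) * h1 +(-(ξ 0 ^ 2 * v 1 - ξ 0 * ξ 1 * v 0)) * h6

lemma frame_norm {ξ n : Plane} (hξ : ‖ξ‖ = 1) (hn : ‖n‖ = 1) (h : ⟪n, ξ⟫ = 0) (v : Plane) :
    ‖v‖ ^ 2 = ⟪v, ξ⟫ ^ 2 + ⟪v, n⟫ ^ 2 := by
  have h1 := frame hξ hn h v
  rw [← real_inner_self_eq_norm_sq]
  nth_rw 2 [h1]
  rw [inner_add_right, inner_smul_right, inner_smul_right]; ring

lemma semicont {E : Set Plane} (hE : IsCompact E) {ε : ℝ} {x : Plane}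
    (hx : x ∈ frontier (eNbhd E ε)) {C : Set Plane} (hC : IsClosed C)
    (h : ∀ e ∈ E, e ∈ C → ‖e - x‖ ≠ ε) :
    ∃ δ > 0, ∀ e ∈ E, e ∈ C → ∀ z, ‖e - z‖ ≤ ε → δ ≤ ‖z - x‖ := by
  rcases (E ∩ C).eq_empty_or_nonempty with h0 | h0
  · refine ⟨1, one_pos, fun e he hc => ?_⟩
    have : e ∈ E ∩ C := ⟨he, hc⟩
    rw [h0] at this; exact this.elim
  · obtain ⟨m, hm, hmin⟩ := (hE.inter_right hC).exists_isMinOn h0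
      (f := fun e => ‖e - x‖) (by fun_prop)
    have h1 := frontier_eNbhd_ge hx m hm.1
    have h2 := h m hm.1 hm.2
    refine ⟨‖m - x‖ - ε, sub_pos.2 (lt_of_le_of_ne h1 (Ne.symm h2)), ?_⟩
    intro e he hc z hz
    have h3 : ‖m - x‖ ≤ ‖e - x‖ := hmin ⟨he, hc⟩
    have h4 : ‖e - x‖ ≤ ‖e - z‖ + ‖z - x‖ := norm_sub_le_norm_sub_add_norm_sub _ _ _
    linarith

/-- The upper arc of the circle of radius `ε` about the point with coordinates `(a, b)`. -/
def arcFun (ε a b s : ℝ) : ℝ := b + Real.sqrt (ε ^ 2 - (s - a) ^ 2)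

lemma arcFun_lip {ε a b s t : ℝ} (hε : 0 < ε) (hs : |s - a| ≤ ε / 2) (ht : |t - a| ≤ ε / 2) :
    arcFun ε a b s - arcFun ε a b t ≤ 1 / Real.sqrt 3 * |s - t| := by
  unfold arcFun
  have hs1 := abs_le.1 hs
  have ht1 := abs_le.1 ht
  have h3 : 0 < Real.sqrt 3 := by positivity
  have h33 : Real.sqrt 3 ^ 2 = 3 := Real.sq_sqrt (by norm_num)
  have key : ∀ u : ℝ, |u - a| ≤ ε / 2 → Real.sqrt 3 / 2 * ε ≤ Real.sqrt (ε ^ 2 - (u - a) ^ 2) := by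
    intro u hu
    apply Real.le_sqrt_of_sq_le
    have := abs_le.1 hu
    rw [mul_pow, div_pow, h33]; nlinarith
  have k1 := key s hs
  have k2 := key t ht
  obtain ⟨P, hP⟩ : ∃ P, P = Real.sqrt (ε ^ 2 - (s - a) ^ 2) := ⟨_, rfl⟩
  obtain ⟨Q, hQ⟩ : ∃ Q, Q = Real.sqrt (ε ^ 2 - (t - a) ^ 2) := ⟨_, rfl⟩
  have hP2 : P ^ 2 = ε ^ 2 - (s - a) ^ 2 := by rw [hP]; exact Real.sq_sqrt (by nlinarith)
  have hQ2 : Q ^ 2 = ε ^ 2 - (t - a) ^ 2 := by rw [hQ]; exact Real.sq_sqrt (by nlinarith)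
  rw [← hP] at k1 ⊢
  rw [← hQ] at k2 ⊢
  have e1 : (P - Q) * (P + Q) = (t - s) * ((s - a) + (t - a)) := by linear_combination hP2 - hQ2
  have e2 : (t - s) * ((s - a) + (t - a)) ≤ |s - t| * ε := by
    calc _ ≤ |(t - s) * ((s - a) + (t - a))| := le_abs_self _
      _ = |s - t| * |(s - a) + (t - a)| := by rw [abs_mul, abs_sub_comm]
      _ ≤ |s - t| * ε := by
        apply mul_le_mul_of_nonneg_left _ (abs_nonneg _)
        exact (abs_add_le _ _).trans (by linarith)
  have e3 : Real.sqrt 3 * ε ≤ P + Q := by linarith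
  have e4 : b + P - (b + Q) = P - Q := by ring
  rw [e4]
  by_contra! hcon
  have e5 : 0 ≤ 1 / Real.sqrt 3 * |s - t| := by positivity
  have e6 : 1 / Real.sqrt 3 * |s - t| * (Real.sqrt 3 * ε) = |s - t| * ε := by field_simp
  have e7 : 0 < Real.sqrt 3 * ε := by positivity
  have e8 : 1 / Real.sqrt 3 * |s - t| * (Real.sqrt 3 * ε) < (P - Q) * (P + Q) := by
    calc _ < (P - Q) * (Real.sqrt 3 * ε) := by gcongr
      _ ≤ _ := by apply mul_le_mul_of_nonneg_left e3; linarith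
  linarith

lemma arc_eq {ε a b s h : ℝ} (hb : b ≤ h) (hd : (a - s) ^ 2 + (b - h) ^ 2 = ε ^ 2) :
    h = arcFun ε a b s := by
  unfold arcFun
  have : ε ^ 2 - (s - a) ^ 2 = (h - b) ^ 2 := by linear_combination -hd
  rw [this, Real.sqrt_sq (by linarith)]; ring

lemma arc_lt {ε a b s h : ℝ} (hb : b ≤ h) (hd : h < arcFun ε a b s) :
    (a - s) ^ 2 + (b - h) ^ 2 < ε ^ 2 := by
  unfold arcFun at hd
  have h1 : h - b < Real.sqrt (ε ^ 2 - (s - a) ^ 2) := by linarith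
  have h2 := (Real.lt_sqrt (by linarith)).1 h1
  nlinarith

lemma arc_le {ε a b s h : ℝ} (hd : (a - s) ^ 2 + (b - h) ^ 2 ≤ ε ^ 2) :
    h ≤ arcFun ε a b s := by
  unfold arcFun
  have := Real.le_sqrt_of_sq_le (x := h - b) (y := ε ^ 2 - (s - a) ^ 2) (by nlinarith)
  linarith

lemma arc_sq {ε a b s : ℝ} (hε : 0 < ε) (hs : |s - a| ≤ ε / 2) :
    (a - s) ^ 2 + (b - arcFun ε a b s) ^ 2 = ε ^ 2 := by
  unfold arcFun
  have := Real.sq_sqrt (x := ε ^ 2 - (s - a) ^ 2) (by have := abs_le.1 hs; nlinarith)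
  linear_combination this

/-- Upper envelope of the arcs for a compact family of centres. -/
lemma envelope {K : Set Plane} (hK : IsCompact K) (hne : K.Nonempty) {ε : ℝ} (hε : 0 < ε)
    {a b : Plane → ℝ} (ha : Continuous a) (hb : Continuous b) (haK : ∀ e ∈ K, |a e| ≤ ε / 4) :
    ∃ f : ℝ → ℝ, LipschitzWith (Real.toNNReal (1 / Real.sqrt 3)) f ∧
      ∀ s ∈ Icc 0 (ε / 4), (∃ e ∈ K, f s = arcFun ε (a e) (b e) s) ∧
        ∀ e ∈ K, arcFun ε (a e) (b e) s ≤ f s := by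
  have h1 : ∀ s : ℝ, ∃ e ∈ K, ∀ e' ∈ K, arcFun ε (a e') (b e') s ≤ arcFun ε (a e) (b e) s := by
    intro s
    obtain ⟨e, he, hm⟩ := hK.exists_isMaxOn hne (f := fun e => arcFun ε (a e) (b e) s)
      (by unfold arcFun; fun_prop)
    exact ⟨e, he, fun e' he' => hm he'⟩
  choose m hm hmax using h1
  have habs : ∀ s ∈ Icc 0 (ε / 4), ∀ e ∈ K, |s - a e| ≤ ε / 2 := by
    intro s hs e he
    have h1 := abs_le.1 (haK e he)
    rw [abs_le]; constructor <;> linarith [hs.1, hs.2]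
  have hL : LipschitzOnWith (Real.toNNReal (1 / Real.sqrt 3))
      (fun s => arcFun ε (a (m s)) (b (m s)) s) (Icc 0 (ε / 4)) := by
    apply LipschitzOnWith.of_le_add_mul'
    intro s hs t ht
    have h1 := arcFun_lip (b := b (m s)) hε (habs s hs _ (hm s)) (habs t ht _ (hm s))
    have h2 := hmax t _ (hm s)
    rw [Real.dist_eq]
    linarith
  obtain ⟨f, hf, hEq⟩ := hL.extend_real
  refine ⟨f, hf, fun s hs => ?_⟩
  rw [← hEq hs]
  exact ⟨⟨m s, hm s, rfl⟩, hmax s⟩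

set_option maxHeartbeats 2000000 in
lemma pair_graph {E : Set Plane} (hE : IsCompact E) {ε : ℝ} (hε : 0 < ε) {x : Plane}
    (hx : x ∈ frontier (eNbhd E ε)) {ξ y n : Plane} (hξo : ξ ∈ outwardDirs E ε x)
    (hyE : y ∈ E) (hyn : y = x - ε • n) (hn : ‖n‖ = 1) (hnξ : ⟪n, ξ⟫ = 0) :
    ∃ f : ℝ → ℝ, LipschitzWith (Real.toNNReal (1 / Real.sqrt 3)) f ∧ f 0 = 0 ∧
      (∀ z ∈ frontier (eNbhd E ε), ∀ w ∈ E, ‖w - z‖ = ε → ‖z - x‖ ≤ ε / 4 → 0 ≤ ⟪z - x, ξ⟫ →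
        ‖w - y‖ ≤ ε / 4 → z = x + ⟪z - x, ξ⟫ • ξ + f ⟪z - x, ξ⟫ • n) ∧
      (x + ε • n ∉ E → ∃ δ > 0, ∀ s ∈ Icc 0 δ,
        x + s • ξ + f s • n ∈ frontier (eNbhd E ε)) := by
  have hξ : ‖ξ‖ = 1 := hξo.1
  set a : Plane → ℝ := fun e => ⟪e - x, ξ⟫ with ha_def
  set b : Plane → ℝ := fun e => ⟪e - x, n⟫ with hb_def
  have ha : Continuous a := by simp only [ha_def]; fun_prop
  have hb : Continuous b := by simp only [hb_def]; fun_prop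
  have hnn : ⟪n, n⟫ = (1 : ℝ) := by rw [real_inner_self_eq_norm_sq, hn]; norm_num
  have hξξ : ⟪ξ, ξ⟫ = (1 : ℝ) := by rw [real_inner_self_eq_norm_sq, hξ]; norm_num
  have hξn : ⟪ξ, n⟫ = (0 : ℝ) := by rw [real_inner_comm]; exact hnξ
  have hdist : ∀ e z : Plane, ‖e - z‖ ^ 2 = (a e - a z) ^ 2 + (b e - b z) ^ 2 := by
    intro e z
    rw [frame_norm hξ hn hnξ (e - z)]
    simp only [ha_def, hb_def, ← inner_sub_left, sub_sub_sub_cancel_right]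
  have hax : a x = 0 := by simp [ha_def]
  have hbx : b x = 0 := by simp [hb_def]
  have hay : a y = 0 := by
    simp only [ha_def, hyn]
    rw [show x - ε • n - x = (-ε) • n by module, inner_smul_left, hnξ]; simp
  have hby : b y = -ε := by
    simp only [hb_def, hyn]
    rw [show x - ε • n - x = (-ε) • n by module, inner_smul_left, hnn]; simp
  have haG : ∀ s t : ℝ, a (x + s • ξ + t • n) = s := by
    intro s t
    simp only [ha_def]
    rw [show x + s • ξ + t • n - x = s • ξ + t • n by module, inner_add_left, inner_smul_left,
      inner_smul_left, hξξ, hnξ]; simp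
  have hbG : ∀ s t : ℝ, b (x + s • ξ + t • n) = t := by
    intro s t
    simp only [hb_def]
    rw [show x + s • ξ + t • n - x = s • ξ + t • n by module, inner_add_left, inner_smul_left,
      inner_smul_left, hξn, hnn]; simp
  have habs : ∀ e z : Plane, |a e - a z| ≤ ‖e - z‖ ∧ |b e - b z| ≤ ‖e - z‖ := by
    intro e z
    constructor
    · apply abs_le_of_sq_le_sq _ (norm_nonneg _)
      rw [hdist]; nlinarith [sq_nonneg (b e - b z)]
    · apply abs_le_of_sq_le_sq _ (norm_nonneg _)
      rw [hdist]; nlinarith [sq_nonneg (a e - a z)]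
  have hge := frontier_eNbhd_ge hx
  have hout : ∀ e ∈ E, ‖e - x‖ = ε → a e ≤ 0 := fun e he h => outward_le hE hε hξo he h
  -- key inequality
  have hkey : ∀ e ∈ E, ∀ z : Plane, ‖e - z‖ ≤ ε → 0 ≤ a e * a z + b e * b z := by
    intro e he z hz
    have h1 := hge e he
    have h2 := hdist e z
    have h3 := hdist e x
    rw [hax, hbx] at h3
    have h4 : ‖e - z‖ ^ 2 ≤ ‖e - x‖ ^ 2 := by gcongr; linarith
    nlinarith [sq_nonneg (a z), sq_nonneg (b z)]
  set K : Set Plane := E ∩ closedBall y (ε / 4) with hK_def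
  have hK : IsCompact K := hE.inter_right isClosed_closedBall
  have hyK : y ∈ K := ⟨hyE, mem_closedBall_self (by positivity)⟩
  have hKn : ∀ e ∈ K, ‖e - y‖ ≤ ε / 4 := fun e he => by
    rw [← dist_eq_norm]; exact he.2
  have haK : ∀ e ∈ K, |a e| ≤ ε / 4 := by
    intro e he
    have := (habs e y).1.trans (hKn e he)
    rwa [hay, sub_zero] at this
  have hbK : ∀ e ∈ K, b e ≤ - (3 * ε / 4) := by
    intro e he
    have := abs_le.1 ((habs e y).2.trans (hKn e he))
    rw [hby] at this; linarith [this.2]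
  obtain ⟨f, hfL, hf⟩ := envelope hK ⟨y, hyK⟩ hε ha hb haK
  have hsK : ∀ s ∈ Icc 0 (ε / 4), ∀ e ∈ K, |s - a e| ≤ ε / 2 := by
    intro s hs e he
    have h1 := abs_le.1 (haK e he)
    rw [abs_le]; constructor <;> linarith [hs.1, hs.2]
  have h0mem : (0:ℝ) ∈ Icc 0 (ε / 4) := ⟨le_rfl, by positivity⟩
  -- lower bound
  have hlow : ∀ s ∈ Icc 0 (ε / 4), - (s ^ 2 / ε) ≤ f s := by
    intro s hs
    refine le_trans ?_ ((hf s hs).2 y hyK)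
    rw [hay, hby]
    apply arc_le
    have h1 : s ^ 2 / ε * ε = s ^ 2 := by field_simp
    have h2 : 0 ≤ s ^ 2 / ε := by positivity
    have h3 : s ^ 2 / ε ≤ ε := by
      rw [div_le_iff₀ hε]; nlinarith [hs.1, hs.2]
    nlinarith
  have hf0 : f 0 = 0 := by
    apply le_antisymm
    · obtain ⟨e, he, h⟩ := (hf 0 h0mem).1
      by_contra! hcon
      rw [h] at hcon
      have h1 := arc_lt (by linarith [hbK e he]) hcon
      have h2 := hge e he.1
      have h3 := hdist e x
      rw [hax, hbx] at h3
      nlinarith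
    · simpa using hlow 0 h0mem
  refine ⟨f, hfL, hf0, ?_, ?_⟩
  · intro z hz w hw hwz hzx hz0 hwy
    have h1 := habs z x
    rw [hax, hbx, sub_zero, sub_zero] at h1
    have hs : a z ∈ Icc 0 (ε / 4) := ⟨hz0, (le_abs_self _).trans (h1.1.trans hzx)⟩
    have hbz : - (ε / 4) ≤ b z := (abs_le.1 (h1.2.trans hzx)).1
    have hwK : w ∈ K := ⟨hw, by rw [mem_closedBall, dist_eq_norm]; exact hwy⟩
    have hd := hdist w z
    rw [hwz] at hd
    have h2 := arc_eq (by linarith [hbK w hwK]) hd.symm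
    have h3 : b z ≤ f (a z) := by
      rw [h2]; exact (hf _ hs).2 w hwK
    have h4 : f (a z) ≤ b z := by
      by_contra! hcon
      obtain ⟨e, he, h⟩ := (hf _ hs).1
      rw [h] at hcon
      have h5 := arc_lt (by linarith [hbK e he]) hcon
      have h6 := frontier_eNbhd_ge hz e he.1
      have h7 := hdist e z
      nlinarith
    have h5 := frame hξ hn hnξ (z - x)
    have h6 : f ⟪z - x, ξ⟫ = ⟪z - x, n⟫ := le_antisymm h4 h3
    rw [h6, add_assoc, ← h5]; abel
  · intro hanti
    -- distance of graph point to maximiser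
    have hmem : ∀ s ∈ Icc 0 (ε / 4), ∃ e ∈ K, ‖e - (x + s • ξ + f s • n)‖ = ε := by
      intro s hs
      obtain ⟨e, he, h⟩ := (hf s hs).1
      refine ⟨e, he, ?_⟩
      have h1 := arc_sq (b := b e) hε (hsK s hs e he)
      rw [← h] at h1
      have h2 := hdist e (x + s • ξ + f s • n)
      rw [haG, hbG, h1] at h2
      exact (pow_left_inj₀ (norm_nonneg _) hε.le (by norm_num)).1 h2
    have hfabs : ∀ s ∈ Icc 0 (ε / 4), |f s| ≤ s := by
      intro s hs
      have h1 := hfL.dist_le_mul s 0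
      rw [hf0, Real.dist_eq, Real.dist_eq, sub_zero, sub_zero, Real.coe_toNNReal _ (by positivity),
        abs_of_nonneg hs.1] at h1
      have h2 : 1 / Real.sqrt 3 ≤ 1 := by
        rw [div_le_one (by positivity)]
        exact Real.le_sqrt_of_sq_le (by norm_num)
      nlinarith [hs.1]
    have hGn : ∀ s t : ℝ, ‖(x + s • ξ + t • n) - x‖ ≤ |s| + |t| := by
      intro s t
      rw [show x + s • ξ + t • n - x = s • ξ + t • n by module]
      refine (norm_add_le _ _).trans ?_
      rw [norm_smul, norm_smul, hξ, hn]; simp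
    -- little o upper bound
    have hup : ∀ η > 0, ∃ δ > 0, ∀ s ∈ Icc 0 (ε / 4), s < δ → f s ≤ η * s := by
      intro η hη
      obtain ⟨δ, hδ, h⟩ := semicont hE hx (C := {e | ε * η / 2 ≤ a e})
        (isClosed_le continuous_const ha) (by
          intro e he hc hn
          have h1 := hout e he hn
          have : 0 < ε * η / 2 := by positivity
          have h2 : ε * η / 2 ≤ a e := hc
          linarith)
      refine ⟨δ / 2, by positivity, fun s hs hsδ => ?_⟩
      by_contra! hcon
      obtain ⟨e, he, hee⟩ := hmem s hs
      have h1 := hkey e he.1 _ hee.le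
      rw [haG, hbG] at h1
      have hs0 : 0 < s := by
        rcases hs.1.eq_or_lt with h0 | h0
        · rw [← h0, hf0] at hcon; simp at hcon
        · exact h0
      have hfp : 0 < f s := lt_of_le_of_lt (by positivity) hcon
      have h2 : ε * η / 2 ≤ a e := by
        by_contra! h3
        have h4 := hbK e he
        have h5 : a e * s < ε * η / 2 * s := by gcongr
        have h6 : b e * f s ≤ - (3 * ε / 4) * f s := by gcongr
        have h7 : ε * (η * s) < ε * f s := by gcongr
        nlinarith
      have h3 := h e he.1 h2 _ hee.le
      have h4 := hGn s (f s)
      have h5 := hfabs s hs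
      rw [abs_of_pos hs0] at h4
      linarith
    -- gap for contributors away from y
    have hgap : ∃ η > 0, ∀ e ∈ E, ε / 4 ≤ ‖e - y‖ → - η ≤ a e → ‖e - x‖ ≠ ε := by
      set Q : Set Plane := E ∩ {e | ε / 4 ≤ ‖e - y‖ ∧ ‖e - x‖ = ε} with hQ
      have hQc : IsCompact Q := by
        apply hE.inter_right
        have hc1 : Continuous (fun e : Plane => ‖e - y‖) := by fun_prop
        have hc2 : Continuous (fun e : Plane => ‖e - x‖) := by fun_prop
        exact (isClosed_le continuous_const hc1).inter (isClosed_eq hc2 continuous_const)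
      have hQneg : ∀ e ∈ Q, a e < 0 := by
        rintro e ⟨he, h1, h2⟩
        refine lt_of_le_of_ne (hout e he h2) ?_
        intro h3
        have h4 := hdist e x
        have h5 := hdist e y
        rw [hax, hbx, h3, h2] at h4
        rw [hay, hby, h3] at h5
        have h6 : (b e - ε) * (b e + ε) = 0 := by linear_combination -h4
        rcases mul_eq_zero.1 h6 with h7 | h7
        · apply hanti
          have h8 := frame hξ hn hnξ (e - x)
          have h9 : ⟪e - x, ξ⟫ = (0:ℝ) := h3
          have h10 : ⟪e - x, n⟫ = ε := by
            have : b e = ε := by linarith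
            exact this
          rw [h9, h10, zero_smul, zero_add] at h8
          rw [← h8]; simpa using he
        · have h8 : ‖e - y‖ ^ 2 = 0 := by rw [h5, sub_neg_eq_add, h7]; norm_num
          have h9 : ‖e - y‖ = 0 := by simpa using h8
          linarith
      rcases Q.eq_empty_or_nonempty with h0 | h0
      · refine ⟨1, one_pos, fun e he h1 _ h2 => ?_⟩
        have : e ∈ Q := ⟨he, h1, h2⟩
        rw [h0] at this; exact this
      · obtain ⟨m, hm, hmax⟩ := hQc.exists_isMaxOn h0 ha.continuousOn
        have hneg := hQneg m hm
        refine ⟨- a m / 2, by linarith, fun e he h1 h2 h3 => ?_⟩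
        have : a e ≤ a m := hmax ⟨he, h1, h3⟩
        linarith
    obtain ⟨η, hη, hgap⟩ := hgap
    obtain ⟨δ₁, hδ₁, h₁⟩ := semicont hE hx (C := {e | ε / 4 ≤ ‖e - y‖} ∩ {e | -η ≤ a e})
      ((isClosed_le continuous_const (by fun_prop)).inter (isClosed_le continuous_const ha))
      (fun e he hc => hgap e he hc.1 hc.2)
    set κ : ℝ := η / (8 * ε) with hκ
    have hκ0 : 0 < κ := by positivity
    have hκε : κ * (8 * ε) = η := by rw [hκ]; field_simp
    obtain ⟨δ₂, hδ₂, h₂⟩ := hup κ hκ0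
    set δ := min (min (δ₁ / 4) (δ₂ / 2)) (min (ε / 8) (κ * ε)) with hδ
    have hδ0 : 0 < δ := by positivity
    have hδ1 : δ ≤ δ₁ / 4 := (min_le_left _ _).trans (min_le_left _ _)
    have hδ2 : δ ≤ δ₂ / 2 := (min_le_left _ _).trans (min_le_right _ _)
    have hδ3 : δ ≤ ε / 8 := (min_le_right _ _).trans (min_le_left _ _)
    have hδ4 : δ ≤ κ * ε := (min_le_right _ _).trans (min_le_right _ _)
    refine ⟨δ, hδ0, fun s hs => ?_⟩
    rcases hs.1.eq_or_lt with h0 | hs0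
    · rw [← h0, hf0]; simpa using hx
    have hs4 : s ∈ Icc 0 (ε / 4) := ⟨hs.1, by linarith [hs.2]⟩
    refine ⟨subset_closure ?_, ?_⟩
    · obtain ⟨e, he, h⟩ := hmem s hs4
      exact (mem_eNbhd hE hε _).2 ⟨e, he.1, h.le⟩
    intro hzint
    have hev : ∀ᶠ t in 𝓝 (0:ℝ), x + s • ξ + (f s + t) • n ∈ eNbhd E ε := by
      have hc : Continuous (fun t : ℝ => x + s • ξ + (f s + t) • n) := by fun_prop
      have : Tendsto (fun t : ℝ => x + s • ξ + (f s + t) • n) (𝓝 0)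
          (𝓝 (x + s • ξ + f s • n)) := by simpa using hc.tendsto 0
      exact this.eventually (mem_interior_iff_mem_nhds.1 hzint)
    obtain ⟨τ₀, hτ₀, hτ⟩ := Metric.eventually_nhds_iff.1 hev
    obtain ⟨τ, hτp, hτ1, hτ2, hτ3⟩ : ∃ τ : ℝ, 0 < τ ∧ τ < τ₀ ∧ τ ≤ κ * s ∧ τ ≤ s := by
      refine ⟨min (τ₀ / 2) (min (κ * s) s), by positivity, ?_, ?_, ?_⟩
      · exact lt_of_le_of_lt (min_le_left _ _) (by linarith)
      · exact (min_le_right _ _).trans (min_le_left _ _)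
      · exact (min_le_right _ _).trans (min_le_right _ _)
    have hz := hτ (y := τ) (by rw [Real.dist_eq, sub_zero, abs_of_pos hτp]; exact hτ1)
    obtain ⟨e, he, hez⟩ := (mem_eNbhd hE hε _).1 hz
    have hfs := hfabs s hs4
    have hfa := abs_le.1 hfs
    have hzx : ‖(x + s • ξ + (f s + τ) • n) - x‖ ≤ 3 * s := by
      refine (hGn s (f s + τ)).trans ?_
      rw [abs_of_pos hs0]
      have := abs_add_le (f s) τ
      rw [abs_of_pos hτp] at this
      linarith
    have heK : ε / 4 ≤ ‖e - y‖ := by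
      by_contra! hcon
      have heK : e ∈ K := ⟨he, by rw [mem_closedBall, dist_eq_norm]; exact hcon.le⟩
      have h1 := hdist e (x + s • ξ + (f s + τ) • n)
      rw [haG, hbG] at h1
      have h2 := arc_le (ε := ε) (a := a e) (b := b e) (s := s) (h := f s + τ) (by
        rw [← h1]; gcongr)
      have h3 := (hf s hs4).2 e heK
      linarith
    have hae : a e < - η := by
      by_contra! hcon
      have := h₁ e he ⟨heK, hcon⟩ _ hez
      linarith [hs.2]
    have h3 := hkey e he _ hez
    rw [haG, hbG] at h3
    have hbe : |b e| ≤ 2 * ε := by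
      have h4 := (habs e x).2
      rw [hbx, sub_zero] at h4
      have h5 : ‖e - x‖ ≤ ‖e - (x + s • ξ + (f s + τ) • n)‖ + ‖(x + s • ξ + (f s + τ) • n) - x‖ :=
        norm_sub_le_norm_sub_add_norm_sub _ _ _
      linarith [hs.2]
    have hfτ : |f s + τ| ≤ 2 * κ * s := by
      have h4 := h₂ s hs4 (by linarith [hs.2])
      have h5 := hlow s hs4
      have h6 : s ^ 2 / ε ≤ κ * s := by
        rw [div_le_iff₀ hε]
        have : s ≤ κ * ε := hs.2.trans hδ4
        nlinarith
      rw [abs_le]; constructor <;> linarith [mul_pos hκ0 hs0]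
    have h7 : b e * (f s + τ) ≤ (2 * ε) * (2 * κ * s) := by
      calc b e * (f s + τ) ≤ |b e * (f s + τ)| := le_abs_self _
        _ = |b e| * |f s + τ| := abs_mul _ _
        _ ≤ _ := by gcongr
    have h8 : a e * s < - η * s := by gcongr
    have h9 : (2 * ε) * (2 * κ * s) = η / 2 * s := by rw [← hκε]; ring
    nlinarith [mul_pos hη hs0]

lemma capture {E : Set Plane} (hE : IsCompact E) {ε : ℝ} (hε : 0 < ε) {x : Plane}
    (hx : x ∈ frontier (eNbhd E ε)) :
    ∃ r₀ > 0, ∀ z ∈ frontier (eNbhd E ε), z ≠ x → ‖z - x‖ < r₀ →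
      ∃ p ∈ extPairs E ε x, ∃ w ∈ E, ‖w - z‖ = ε ∧ 0 ≤ ⟪z - x, p.1⟫ ∧ ‖w - p.2‖ ≤ ε / 4 := by
  by_contra! hcon
  have hpos : ∀ n : ℕ, (0:ℝ) < 1 / ((n:ℝ) + 1) := fun n => by positivity
  choose z hz hzx hzn hzp using fun n : ℕ => hcon (1 / ((n:ℝ) + 1)) (hpos n)
  choose w hwE hwz using fun n => frontier_eNbhd_ex hE hε (hz n)
  have hd0 : ∀ n, 0 < ‖z n - x‖ := fun n => norm_pos_iff.2 (sub_ne_zero.2 (hzx n))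
  set d : ℕ → Plane := fun n => ‖z n - x‖⁻¹ • (z n - x) with hd
  have hd1 : ∀ n, ‖d n‖ = 1 := by
    intro n
    simp only [hd]
    rw [norm_smul, norm_inv, norm_norm, inv_mul_cancel₀ (hd0 n).ne']
  have hcomp : IsCompact (sphere (0:Plane) 1 ×ˢ E) := (isCompact_sphere 0 1).prod hE
  obtain ⟨⟨ξ, y⟩, hmem, φ, hφ, hlim⟩ := hcomp.tendsto_subseq (x := fun n => (d n, w n))
    (fun n => ⟨by simp [hd1 n], hwE n⟩)
  have hlim1 : Tendsto (fun n => d (φ n)) atTop (𝓝 ξ) := (continuous_fst.tendsto _).comp hlim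
  have hlim2 : Tendsto (fun n => w (φ n)) atTop (𝓝 y) := (continuous_snd.tendsto _).comp hlim
  have hξ : ‖ξ‖ = 1 := by simpa using hmem.1
  have hyE : y ∈ E := hmem.2
  have hnorm0 : Tendsto (fun n => ‖z (φ n) - x‖) atTop (𝓝 0) := by
    have h1 : Tendsto (fun n : ℕ => 1 / ((φ n : ℕ) + 1 : ℝ)) atTop (𝓝 0) :=
      tendsto_one_div_add_atTop_nhds_zero_nat.comp hφ.tendsto_atTop
    exact squeeze_zero (fun n => norm_nonneg _) (fun n => (hzn (φ n)).le) h1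
  have hzlim : Tendsto (fun n => z (φ n)) atTop (𝓝 x) := tendsto_iff_norm_sub_tendsto_zero.2 hnorm0
  have hyx : ‖y - x‖ = ε := by
    have h1 : Tendsto (fun n => ‖w (φ n) - z (φ n)‖) atTop (𝓝 ‖y - x‖) := (hlim2.sub hzlim).norm
    simp only [hwz] at h1
    exact tendsto_nhds_unique h1 tendsto_const_nhds
  -- outward
  have hout : ξ ∈ outwardDirs E ε x := by
    have hu : ∀ n : ℕ, ∃ u, u ∉ eNbhd E ε ∧
        ‖u - z (φ n)‖ < ‖z (φ n) - x‖ * (1 / ((n:ℝ) + 1)) := by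
      intro n
      have h1 : z (φ n) ∈ closure (eNbhd E ε)ᶜ := by
        rw [closure_compl]; exact (hz (φ n)).2
      obtain ⟨u, hu, hd⟩ := Metric.mem_closure_iff.1 h1 _ (mul_pos (hd0 (φ n)) (hpos n))
      refine ⟨u, hu, ?_⟩
      rw [← dist_eq_norm, dist_comm]; exact hd
    choose u hu hun using hu
    have hA : Tendsto (fun n => ‖z (φ n) - x‖⁻¹ • (u n - x)) atTop (𝓝 ξ) := by
      have h1 : Tendsto (fun n => ‖z (φ n) - x‖⁻¹ • (u n - z (φ n))) atTop (𝓝 0) := by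
        refine squeeze_zero_norm (fun n => ?_) tendsto_one_div_add_atTop_nhds_zero_nat
        rw [norm_smul, norm_inv, norm_norm, inv_mul_le_iff₀ (hd0 _)]
        exact (hun n).le
      have h2 := hlim1.add h1
      rw [add_zero] at h2
      refine h2.congr (fun n => ?_)
      simp only [hd]
      rw [← smul_add]; congr 1; abel
    refine ⟨hξ, u, hu, ?_, ?_⟩
    · have h1 : Tendsto (fun n => ‖z (φ n) - x‖ • (‖z (φ n) - x‖⁻¹ • (u n - x))) atTop
          (𝓝 ((0:ℝ) • ξ)) := hnorm0.smul hA
      rw [zero_smul] at h1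
      have h2 : Tendsto (fun n => u n - x) atTop (𝓝 0) := by
        refine h1.congr (fun n => ?_)
        rw [smul_smul, mul_inv_cancel₀ (hd0 _).ne', one_smul]
      have h3 := h2.add_const x
      simpa using h3
    · have h1 : Tendsto (fun n => ‖(‖z (φ n) - x‖⁻¹ • (u n - x))‖⁻¹) atTop (𝓝 (‖ξ‖⁻¹)) :=
        hA.norm.inv₀ (by rw [hξ]; norm_num)
      have h2 := h1.smul hA
      rw [hξ, inv_one, one_smul] at h2
      refine h2.congr (fun n => ?_)
      rw [norm_smul, norm_inv, norm_norm, mul_inv, inv_inv, smul_smul]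
      congr 1
      have := (hd0 (φ n)).ne'
      field_simp
  have hge := frontier_eNbhd_ge hx
  have hperp : ⟪y - x, ξ⟫ = (0:ℝ) := by
    apply le_antisymm (outward_le hE hε hout hyE hyx)
    have h1 : Tendsto (fun n => ⟪w (φ n) - x, d (φ n)⟫) atTop (𝓝 ⟪y - x, ξ⟫) :=
      (hlim2.sub_const x).inner hlim1
    refine ge_of_tendsto' h1 (fun n => ?_)
    simp only [hd]
    rw [inner_smul_right]
    apply mul_nonneg (by positivity)
    have h2 : ‖w (φ n) - z (φ n)‖ ^ 2 = ‖w (φ n) - x‖ ^ 2 - 2 * ⟪w (φ n) - x, z (φ n) - x⟫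
        + ‖z (φ n) - x‖ ^ 2 := by
      rw [← norm_sub_sq_real]; congr 2; abel
    have h3 := hge _ (hwE (φ n))
    rw [hwz] at h2
    nlinarith [sq_nonneg ‖z (φ n) - x‖]
  have hp : (ξ, y) ∈ extPairs E ε x := ⟨hout, (mem_contributors hE hε hx).2 ⟨hyE, hyx⟩, hperp⟩
  have hev1 : ∀ᶠ n in atTop, 0 < ⟪d (φ n), ξ⟫ := by
    have h1 : Tendsto (fun n => ⟪d (φ n), ξ⟫) atTop (𝓝 ⟪ξ, ξ⟫) := hlim1.inner tendsto_const_nhds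
    refine h1.eventually (lt_mem_nhds ?_)
    rw [real_inner_self_eq_norm_sq, hξ]; norm_num
  have hev2 : ∀ᶠ n in atTop, ‖w (φ n) - y‖ < ε / 4 := by
    have h1 := tendsto_iff_norm_sub_tendsto_zero.1 hlim2
    exact h1.eventually (gt_mem_nhds (by positivity))
  obtain ⟨n, h1, h2⟩ := (hev1.and hev2).exists
  have h3 : 0 ≤ ⟪z (φ n) - x, ξ⟫ := by
    simp only [hd] at h1
    rw [inner_smul_left] at h1
    have h4 : (0:ℝ) < ‖z (φ n) - x‖⁻¹ := inv_pos.2 (hd0 _)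
    exact (pos_of_mul_pos_right h1 (by simpa using h4.le)).le
  have := hzp (φ n) (ξ, y) hp (w (φ n)) (hwE _) (hwz _) h3
  exact absurd h2 (not_lt.2 this.le)

lemma accum {E : Set Plane} (hE : IsCompact E) {ε : ℝ} (hε : 0 < ε) {x : Plane}
    (hx : x ∈ frontier (eNbhd E ε)) {r : ℝ} (hr : 0 < r) :
    ∃ z ∈ frontier (eNbhd E ε), z ≠ x ∧ ‖z - x‖ < r := by
  have h1 : x ∈ closure (eNbhd E ε)ᶜ := by rw [closure_compl]; exact hx.2
  obtain ⟨u, hu, hud⟩ := Metric.mem_closure_iff.1 h1 (min r ε) (by positivity)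
  obtain ⟨y, hy, hyx⟩ := frontier_eNbhd_ex hE hε hx
  have hxE : x ∈ eNbhd E ε := (isClosed_eNbhd E ε).frontier_subset hx
  have hux : u ≠ x := fun h => hu (h ▸ hxE)
  set ρ := ‖u - x‖ with hρ
  have hρ0 : 0 < ρ := norm_pos_iff.2 (sub_ne_zero.2 hux)
  have hρ1 : ρ < min r ε := by rw [hρ, ← dist_eq_norm, dist_comm]; exact hud
  have hρr : ρ < r := hρ1.trans_le (min_le_left _ _)
  have hρε : ρ < ε := hρ1.trans_le (min_le_right _ _)
  have hconn : IsPreconnected (sphere x ρ) :=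
    isPreconnected_sphere (by rw [rank_eq_card_basis (EuclideanSpace.basisFun (Fin 2) ℝ).toBasis]; simp) x ρ
  by_contra! hcon
  have hcov : sphere x ρ ⊆ interior (eNbhd E ε) ∪ (eNbhd E ε)ᶜ := by
    intro z hz
    by_cases hzi : z ∈ eNbhd E ε
    · left
      by_contra hni
      have hzx : ‖z - x‖ = ρ := by simpa [dist_eq_norm] using hz
      have := hcon z ⟨subset_closure hzi, hni⟩ (by
        rintro rfl; simp at hzx; linarith)
      linarith
    · right; exact hzi
  set c : Plane := x + (ρ / ε) • (y - x) with hc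
  have hcs : c ∈ sphere x ρ := by
    rw [mem_sphere, dist_eq_norm, hc, add_sub_cancel_left, norm_smul, hyx, Real.norm_eq_abs,
      abs_of_pos (by positivity)]
    field_simp
  have hcE : c ∈ eNbhd E ε := by
    refine (mem_eNbhd hE hε _).2 ⟨y, hy, ?_⟩
    rw [show y - c = (1 - ρ / ε) • (y - x) by rw [hc]; module, norm_smul, hyx, Real.norm_eq_abs,
      abs_of_pos (by rw [sub_pos, div_lt_one hε]; exact hρε)]
    have : 0 < ρ / ε := by positivity
    nlinarith
  have hci : c ∈ interior (eNbhd E ε) := (hcov hcs).resolve_right (fun h => h hcE)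
  obtain ⟨z, -, hz1, hz2⟩ := hconn _ _ isOpen_interior (isClosed_eNbhd E ε).isOpen_compl hcov
    ⟨c, hcs, hci⟩ ⟨u, by rw [mem_sphere, dist_eq_norm], hu⟩
  exact hz2 (interior_subset hz1)

/-- Rotation by a right angle. -/
def rotJ (v : Plane) : Plane := !₂[-v 1, v 0]

lemma rotJ_norm (v : Plane) : ‖rotJ v‖ = ‖v‖ := by
  simp [rotJ, EuclideanSpace.norm_eq, Fin.sum_univ_two, add_comm]

lemma rotJ_inner (v w : Plane) : ⟪rotJ v, w⟫ = -⟪rotJ w, v⟫ := by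
  simp [rotJ, PiLp.inner_apply, Fin.sum_univ_two]; ring

lemma rotJ_self (v : Plane) : ⟪rotJ v, v⟫ = (0:ℝ) := by
  simp [rotJ, PiLp.inner_apply, Fin.sum_univ_two]; ring

lemma eq_or_neg {ξ n ζ : Plane} (hξ : ‖ξ‖ = 1) (hn : ‖n‖ = 1) (h : ⟪n, ξ⟫ = 0)
    (hζ : ‖ζ‖ = 1) (h0 : ⟪ζ, n⟫ = 0) : ζ = ξ ∨ ζ = -ξ := by
  have h1 := frame hξ hn h ζ
  have h2 := frame_norm hξ hn h ζ
  rw [h0, hζ] at h2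
  rw [h0, zero_smul, add_zero] at h1
  have h3 : (⟪ζ, ξ⟫ - 1) * (⟪ζ, ξ⟫ + 1) = 0 := by linear_combination -h2
  rcases mul_eq_zero.1 h3 with h4 | h4
  · left; rw [h1, show ⟪ζ, ξ⟫ = (1:ℝ) by linarith, one_smul]
  · right; rw [h1, show ⟪ζ, ξ⟫ = (-1:ℝ) by linarith, neg_smul, one_smul]

lemma extPairs_finite {E : Set Plane} (hE : IsCompact E) {ε : ℝ} (hε : 0 < ε) {x : Plane}
    (hx : x ∈ frontier (eNbhd E ε)) : (extPairs E ε x).Finite := by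
  have hS : ∀ σ : ℝ, σ ≠ 0 → {p ∈ extPairs E ε x | p.2 - x = σ • rotJ p.1}.Finite := by
    intro σ hσ
    rcases {p ∈ extPairs E ε x | p.2 - x = σ • rotJ p.1}.eq_empty_or_nonempty with h0 | ⟨q, hq, hq2⟩
    · rw [h0]; exact finite_empty
    · have hfin : ((fun ξ : Plane => (ξ, x + σ • rotJ ξ)) '' {q.1, -q.1}).Finite :=
        (Set.toFinite _).image _
      refine hfin.subset ?_
      rintro p ⟨hp, hp2⟩
      have hq3 := (mem_contributors hE hε hx).1 hq.2.1
      have hp3 := (mem_contributors hE hε hx).1 hp.2.1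
      have h1 := outward_le hE hε hq.1 hp3.1 hp3.2
      have h2 := outward_le hE hε hp.1 hq3.1 hq3.2
      rw [hp2, inner_smul_left] at h1
      rw [hq2, inner_smul_left, rotJ_inner] at h2
      simp only [conj_trivial] at h1 h2
      have h3 : σ * ⟪rotJ p.1, q.1⟫ = 0 := by linarith
      have h4 := (mul_eq_zero.1 h3).resolve_left hσ
      have h5 : ⟪p.1, rotJ q.1⟫ = (0:ℝ) := by
        rw [real_inner_comm, rotJ_inner, h4, neg_zero]
      have h6 := eq_or_neg hq.1.1 (by rw [rotJ_norm]; exact hq.1.1) (rotJ_self q.1) hp.1.1 h5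
      refine ⟨p.1, h6, ?_⟩
      ext1
      · rfl
      · simp only [← hp2]; abel
  refine ((hS ε hε.ne').union (hS (-ε) (by linarith))).subset ?_
  intro p hp
  have hp3 := (mem_contributors hE hε hx).1 hp.2.1
  have hr : ‖rotJ p.1‖ = 1 := by rw [rotJ_norm]; exact hp.1.1
  have h1 := frame hp.1.1 hr (rotJ_self p.1) (p.2 - x)
  have h2 := frame_norm hp.1.1 hr (rotJ_self p.1) (p.2 - x)
  rw [hp.2.2, hp3.2] at h2
  rw [hp.2.2, zero_smul, zero_add] at h1
  have h3 : (⟪p.2 - x, rotJ p.1⟫ - ε) * (⟪p.2 - x, rotJ p.1⟫ + ε) = 0 := by linear_combination -h2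
  rcases mul_eq_zero.1 h3 with h4 | h4
  · left
    refine ⟨hp, ?_⟩
    rwa [show ⟪p.2 - x, rotJ p.1⟫ = ε by linarith] at h1
  · right
    refine ⟨hp, ?_⟩
    rwa [show ⟪p.2 - x, rotJ p.1⟫ = -ε by linarith] at h1

lemma no_antipode {E : Set Plane} (hE : IsCompact E) {ε : ℝ} (hε : 0 < ε) {x : Plane}
    (hx : x ∈ frontier (eNbhd E ε)) {ξ n : Plane} (hn : ‖n‖ = 1)
    (hp : (ξ, x - ε • n) ∈ extPairs E ε x) (hnξ : ⟪n, ξ⟫ = 0)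
    (h : IsWedge E ε x ∨ x ∈ unp E ε) : x + ε • n ∉ E := by
  intro hcon
  have hy := (mem_contributors hE hε hx).1 hp.2.1
  have hnorm : ‖x + ε • n - x‖ = ε := by
    rw [add_sub_cancel_left, norm_smul, hn, Real.norm_eq_abs, abs_of_pos hε, mul_one]
  rcases h with h | h
  · obtain ⟨-, ξ₁, ξ₂, hext, hne, hne'⟩ := h
    have key : ∀ ζ ∈ extOutward E ε x, ζ = ξ ∨ ζ = -ξ := by
      intro ζ hζ
      have h1 := outward_le hE hε hζ.1 hcon hnorm
      have h2 := outward_le hE hε hζ.1 hy.1 hy.2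
      simp only at h2
      rw [add_sub_cancel_left, inner_smul_left] at h1
      rw [show x - ε • n - x = (-ε) • n by module, inner_smul_left] at h2
      simp only [conj_trivial] at h1 h2
      have h3 : ε * ⟪n, ζ⟫ = 0 := by linarith
      have h4 := (mul_eq_zero.1 h3).resolve_left hε.ne'
      exact eq_or_neg hp.1.1 hn hnξ hζ.1.1 (by rw [real_inner_comm]; exact h4)
    rcases key ξ₁ (by rw [hext]; simp) with h1 | h1 <;>
      rcases key ξ₂ (by rw [hext]; simp) with h2 | h2 <;> simp [h1, h2] at hne hne'
  · obtain ⟨-, y₀, hy₀⟩ := h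
    have h1 : x + ε • n ∈ contributors E ε x := (mem_contributors hE hε hx).2 ⟨hcon, hnorm⟩
    have h2 : x - ε • n ∈ contributors E ε x := hp.2.1
    rw [hy₀, mem_singleton_iff] at h1 h2
    have h3 : (2 * ε) • n = 0 := by
      have : (x + ε • n) - (x - ε • n) = 0 := by rw [h1, h2, sub_self]
      rw [← this]; module
    rcases smul_eq_zero.1 h3 with h4 | h4
    · linarith
    · rw [h4] at hn; simp at hn

/-- A decreasing sequence of disjoint intervals accumulating at zero. -/
lemma intervals {P : ℝ → ℝ → Prop}
    (h : ∀ δ > 0, ∃ a b : ℝ, 0 < a ∧ a < b ∧ b < δ ∧ P a b) :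
    ∃ I : ℕ → ℝ × ℝ, (∀ n, (I n).1 < (I n).2) ∧ (∀ n, P (I n).1 (I n).2) ∧
      (Pairwise fun m n => Disjoint (Ioo (I m).1 (I m).2) (Ioo (I n).1 (I n).2)) ∧
      Tendsto (fun n => (I n).2) atTop (nhds 0) := by
  have h' : ∀ δ : ℝ, ∃ q : ℝ × ℝ, 0 < δ → 0 < q.1 ∧ q.1 < q.2 ∧ q.2 < δ ∧ P q.1 q.2 := by
    intro δ
    by_cases hδ : 0 < δ
    · obtain ⟨a, b, hab⟩ := h δ hδ
      exact ⟨(a, b), fun _ => hab⟩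
    · exact ⟨(0, 0), fun h => absurd h hδ⟩
  choose q hq using h'
  let I : ℕ → ℝ × ℝ := fun n => Nat.rec (q 1)
    (fun k prev => q (min prev.1 (1 / ((k:ℝ) + 1)))) n
  have hsucc : ∀ k, I (k + 1) = q (min (I k).1 (1 / ((k:ℝ) + 1))) := fun k => rfl
  have hpos : ∀ k, 0 < (I k).1 ∧ (I k).1 < (I k).2 ∧ P (I k).1 (I k).2 := by
    intro k
    induction k with
    | zero =>
      have := hq 1 one_pos
      exact ⟨this.1, this.2.1, this.2.2.2⟩
    | succ k ih =>
      rw [hsucc]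
      have := hq (min (I k).1 (1 / ((k:ℝ) + 1))) (lt_min ih.1 (by positivity))
      exact ⟨this.1, this.2.1, this.2.2.2⟩
  have hlt : ∀ k, (I (k + 1)).2 < min (I k).1 (1 / ((k:ℝ) + 1)) := by
    intro k
    rw [hsucc]
    exact (hq _ (lt_min (hpos k).1 (by positivity))).2.2.1
  have hanti : Antitone (fun k => (I k).2) := by
    refine antitone_nat_of_succ_le (fun k => ?_)
    exact ((hlt k).le.trans (min_le_left _ _)).trans (hpos k).2.1.le
  have hsep : ∀ m n, m < n → (I n).2 ≤ (I m).1 := by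
    intro m n hmn
    have h1 : (I n).2 ≤ (I (m + 1)).2 := hanti hmn
    exact h1.trans ((hlt m).le.trans (min_le_left _ _))
  have hdis : ∀ m n, m < n → Disjoint (Ioo (I m).1 (I m).2) (Ioo (I n).1 (I n).2) := by
    intro m n hmn
    rw [Set.disjoint_left]
    intro t h1 h2
    linarith [hsep m n hmn, h1.1, h2.2]
  refine ⟨I, fun n => (hpos n).2.1, fun n => (hpos n).2.2, ?_, ?_⟩
  · intro m n hmn
    rcases lt_or_gt_of_ne hmn with h1 | h1
    · exact hdis m n h1
    · exact (hdis n m h1).symm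
  · rw [← tendsto_add_atTop_iff_nat 1]
    refine squeeze_zero (fun n => ?_) (fun n => ?_) tendsto_one_div_add_atTop_nhds_zero_nat
    · exact ((hpos (n + 1)).1.trans (hpos (n + 1)).2.1).le
    · exact (hlt n).le.trans (min_le_right _ _)

/-- The graph map attached to an extremal pair. -/
def gMap (x : Plane) (p : Plane × Plane) (F : ℝ → ℝ) (s : ℝ) : Plane :=
  x + s • p.1 + (F s) • (x - p.2)

lemma pair_data {E : Set Plane} (hE : IsCompact E) {ε : ℝ} (hε : 0 < ε) {x : Plane}
    (hx : x ∈ frontier (eNbhd E ε)) {p : Plane × Plane} (hp : p ∈ extPairs E ε x) :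
    ∃ F : ℝ → ℝ, LipschitzWith (Real.toNNReal (1 / (Real.sqrt 3 * ε))) F ∧
      LipschitzWith (Real.toNNReal (2 / Real.sqrt 3)) (gMap x p F) ∧
      gMap x p F 0 = x ∧
      (∀ s t, 0 ≤ s → s < t → ‖gMap x p F s - x‖ < ‖gMap x p F t - x‖) ∧
      (∀ s, 0 ≤ s → s ≤ ‖gMap x p F s - x‖) ∧
      (∀ z ∈ frontier (eNbhd E ε), ∀ w ∈ E, ‖w - z‖ = ε → ‖z - x‖ ≤ ε / 4 → 0 ≤ ⟪z - x, p.1⟫ →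
        ‖w - p.2‖ ≤ ε / 4 → z = gMap x p F ⟪z - x, p.1⟫) ∧
      (IsWedge E ε x ∨ x ∈ unp E ε → ∃ δ > 0, ∀ s ∈ Icc 0 δ,
        gMap x p F s ∈ frontier (eNbhd E ε)) := by
  obtain ⟨ξ, y⟩ := p
  have hξo : ξ ∈ outwardDirs E ε x := hp.1
  have hξ : ‖ξ‖ = 1 := hξo.1
  obtain ⟨hyE, hyx⟩ := (mem_contributors hE hε hx).1 hp.2.1
  have hperp : ⟪y - x, ξ⟫ = (0:ℝ) := hp.2.2
  set n : Plane := ε⁻¹ • (x - y) with hn_def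
  have hεn : ε • n = x - y := by rw [hn_def, smul_smul, mul_inv_cancel₀ hε.ne', one_smul]
  have hyn : y = x - ε • n := by rw [hεn]; abel
  have hn : ‖n‖ = 1 := by
    simp only at hyx
    rw [hn_def, norm_smul, norm_sub_rev, hyx, norm_inv, Real.norm_eq_abs, abs_of_pos hε,
      inv_mul_cancel₀ hε.ne']
  have hnξ : ⟪n, ξ⟫ = (0:ℝ) := by
    rw [hn_def, inner_smul_left, ← neg_sub y x, inner_neg_left, hperp]; simp
  have hξn : ⟪ξ, n⟫ = (0:ℝ) := by rw [real_inner_comm]; exact hnξ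
  obtain ⟨f, hfL, hf0, hcap, hfr⟩ := pair_graph hE hε hx hξo hyE hyn hn hnξ
  have hG : ∀ s, gMap x (ξ, y) (fun s => ε⁻¹ * f s) s = x + s • ξ + f s • n := by
    intro s
    simp only [gMap]
    rw [hn_def, smul_smul, mul_comm]
  have h3 : 0 < Real.sqrt 3 := by positivity
  have h33 : Real.sqrt 3 ^ 2 = 3 := Real.sq_sqrt (by norm_num)
  have hfd : ∀ s t, |f s - f t| ≤ 1 / Real.sqrt 3 * |s - t| := by
    intro s t
    have h1 := hfL.dist_le_mul s t
    rwa [Real.dist_eq, Real.dist_eq, Real.coe_toNNReal _ (by positivity)] at h1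
  have hfd2 : ∀ s t, (f s - f t) ^ 2 ≤ 1 / 3 * (s - t) ^ 2 := by
    intro s t
    have h1 := pow_le_pow_left₀ (abs_nonneg _) (hfd s t) 2
    rw [mul_pow, sq_abs, sq_abs, div_pow, h33] at h1
    simpa using h1
  have hcomb : ∀ s t : ℝ, ‖s • ξ + t • n‖ ^ 2 = s ^ 2 + t ^ 2 := by
    intro s t
    rw [norm_add_sq_real, norm_smul, norm_smul, hξ, hn, inner_smul_left, inner_smul_right, hξn]
    simp
  have hGx : ∀ s, ‖gMap x (ξ, y) (fun s => ε⁻¹ * f s) s - x‖ ^ 2 = s ^ 2 + f s ^ 2 := by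
    intro s
    rw [hG, show x + s • ξ + f s • n - x = s • ξ + f s • n by module, hcomb]
  refine ⟨fun s => ε⁻¹ * f s, ?_, ?_, ?_, ?_, ?_, ?_, ?_⟩
  · apply LipschitzWith.of_dist_le_mul
    intro s t
    rw [Real.coe_toNNReal _ (by positivity), Real.dist_eq, Real.dist_eq, ← mul_sub, abs_mul,
      abs_of_pos (inv_pos.2 hε)]
    calc ε⁻¹ * |f s - f t| ≤ ε⁻¹ * (1 / Real.sqrt 3 * |s - t|) := by
          gcongr; exact hfd s t
      _ = _ := by field_simp
  · apply LipschitzWith.of_dist_le_mul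
    intro s t
    rw [Real.coe_toNNReal _ (by positivity), dist_eq_norm, Real.dist_eq, hG, hG]
    apply le_of_sq_le_sq _ (by positivity)
    rw [show x + s • ξ + f s • n - (x + t • ξ + f t • n) = (s - t) • ξ + (f s - f t) • n by module,
      hcomb, mul_pow, div_pow, h33, sq_abs]
    linarith [hfd2 s t]
  · rw [hG, hf0]; simp
  · intro s t hs hst
    apply lt_of_pow_lt_pow_left₀ 2 (norm_nonneg _)
    rw [hGx, hGx]
    have h1 := hfd2 s t
    have h2 := hfd2 s 0
    have h4 := hfd2 t 0
    rw [hf0, sub_zero, sub_zero] at h2 h4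
    nlinarith [sq_nonneg (f s + f t + (s + t) / 3), sq_nonneg (3 * (f s - f t) + (f s + f t)),
      mul_pos (sub_pos.2 hst) (lt_of_le_of_lt hs hst), mul_nonneg hs (sub_pos.2 hst).le,
      abs_le.1 (hfd s t)]
  · intro s hs
    apply le_of_sq_le_sq _ (norm_nonneg _)
    rw [hGx]; nlinarith [sq_nonneg (f s)]
  · intro z hz w hw hwz hzx hz0 hwy
    rw [hG]
    exact hcap z hz w hw hwz hzx hz0 hwy
  · intro h
    have hanti := no_antipode hE hε hx hn (by rw [← hyn]; exact hp) hnξ h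
    obtain ⟨δ, hδ, h1⟩ := hfr hanti
    exact ⟨δ, hδ, fun s hs => by rw [hG]; exact h1 s hs⟩


/-- Local boundary representation: near `x`, the boundary `∂E_ε` is a finite union of
graphs of continuous (indeed Lipschitz) functions indexed by the extremal pairs. -/
theorem local_boundary_representation (E : Set Plane) (hE : IsCompact E) {ε : ℝ}
    (hε : 0 < ε) (x : Plane) (hx : x ∈ frontier (eNbhd E ε)) :
    ∃ r > 0, ∃ F : Plane × Plane → ℝ → ℝ, ∃ A : Plane × Plane → Set ℝ,
      (∀ p ∈ extPairs E ε x,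
        ContinuousOn (F p) (Icc 0 (ε / 2)) ∧
        LipschitzOnWith (Real.toNNReal (1 / (Real.sqrt 3 * ε))) (F p) (Icc 0 r) ∧
        IsClosed (A p) ∧ A p ⊆ Icc 0 (ε / 2) ∧
        LipschitzOnWith (Real.toNNReal (2 / Real.sqrt 3))
          (fun s => x + s • p.1 + (F p s) • (x - p.2)) (Icc 0 r) ∧
        ((∃ s, 0 < s ∧ s ≤ ε / 2 ∧ A p = Icc 0 s) ∨
          (∃ I : ℕ → ℝ × ℝ, (∀ n, (I n).1 < (I n).2) ∧
            (∀ n, Ioo (I n).1 (I n).2 ⊆ Icc 0 (ε / 2) \ A p) ∧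
            (Pairwise fun m n => Disjoint (Ioo (I m).1 (I m).2) (Ioo (I n).1 (I n).2)) ∧
            Tendsto (fun n => (I n).2) atTop (nhds 0)))) ∧
      (frontier (eNbhd E ε) ∩ closedBall x r =
        ⋃ p ∈ extPairs E ε x, (fun s => x + s • p.1 + (F p s) • (x - p.2)) '' A p) ∧
      ((IsWedge E ε x ∨ x ∈ unp E ε) →
        ∀ p ∈ extPairs E ε x, ∃ s, 0 < s ∧ s ≤ ε / 2 ∧ A p = Icc 0 s) := by
  have hdata : ∀ p : Plane × Plane, ∃ F : ℝ → ℝ, p ∈ extPairs E ε x →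
      LipschitzWith (Real.toNNReal (1 / (Real.sqrt 3 * ε))) F ∧
      LipschitzWith (Real.toNNReal (2 / Real.sqrt 3)) (gMap x p F) ∧
      gMap x p F 0 = x ∧
      (∀ s t, 0 ≤ s → s < t → ‖gMap x p F s - x‖ < ‖gMap x p F t - x‖) ∧
      (∀ s, 0 ≤ s → s ≤ ‖gMap x p F s - x‖) ∧
      (∀ z ∈ frontier (eNbhd E ε), ∀ w ∈ E, ‖w - z‖ = ε → ‖z - x‖ ≤ ε / 4 → 0 ≤ ⟪z - x, p.1⟫ →
        ‖w - p.2‖ ≤ ε / 4 → z = gMap x p F ⟪z - x, p.1⟫) ∧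
      (IsWedge E ε x ∨ x ∈ unp E ε → ∃ δ > 0, ∀ s ∈ Icc 0 δ,
        gMap x p F s ∈ frontier (eNbhd E ε)) := by
    intro p
    by_cases hp : p ∈ extPairs E ε x
    · obtain ⟨F, hF⟩ := pair_data hE hε hx hp
      exact ⟨F, fun _ => hF⟩
    · exact ⟨fun _ => 0, fun h => absurd h hp⟩
  choose F hF using hdata
  obtain ⟨r₀, hr₀, hcapt⟩ := capture hE hε hx
  -- threshold for the interval case
  have hthr : ∀ p : Plane × Plane, ∃ δ > 0,
      (∃ δ' > 0, ∀ s ∈ Icc 0 δ', gMap x p (F p) s ∈ frontier (eNbhd E ε)) →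
      ∀ s ∈ Icc 0 δ, gMap x p (F p) s ∈ frontier (eNbhd E ε) := by
    intro p
    by_cases h : ∃ δ' > 0, ∀ s ∈ Icc 0 δ', gMap x p (F p) s ∈ frontier (eNbhd E ε)
    · obtain ⟨δ', hδ', h'⟩ := h
      exact ⟨δ', hδ', fun _ => h'⟩
    · exact ⟨1, one_pos, fun h' => absurd h' h⟩
  choose δ hδ hδfr using hthr
  have hev : ∀ᶠ r in 𝓝[>] (0:ℝ), ∀ p ∈ extPairs E ε x, r < δ p := by
    rw [eventually_all_finite (extPairs_finite hE hε hx)]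
    intro p _
    exact mem_nhdsWithin_of_mem_nhds (gt_mem_nhds (hδ p))
  have hev2 : ∀ᶠ r in 𝓝[>] (0:ℝ), r < min r₀ (ε / 4) :=
    mem_nhdsWithin_of_mem_nhds (gt_mem_nhds (by positivity))
  have hev3 : ∀ᶠ r in 𝓝[>] (0:ℝ), 0 < r := self_mem_nhdsWithin
  obtain ⟨r, ⟨hrδ, hr1⟩, hr⟩ := ((hev.and hev2).and hev3).exists
  have hrr₀ : r < r₀ := hr1.trans_le (min_le_left _ _)
  have hrε : r < ε / 4 := hr1.trans_le (min_le_right _ _)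
  set A : Plane × Plane → Set ℝ := fun p =>
    Icc 0 (ε / 2) ∩ (gMap x p (F p)) ⁻¹' (frontier (eNbhd E ε) ∩ closedBall x r) with hA
  have hAcl : ∀ p ∈ extPairs E ε x, IsClosed (A p) := by
    intro p hp
    exact isClosed_Icc.inter ((isClosed_frontier.inter isClosed_closedBall).preimage
      (hF p hp).2.1.continuous)
  have hAint : ∀ p ∈ extPairs E ε x,
      (∃ δ' > 0, ∀ s ∈ Icc 0 δ', gMap x p (F p) s ∈ frontier (eNbhd E ε)) →
      ∃ s, 0 < s ∧ s ≤ ε / 2 ∧ A p = Icc 0 s := by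
    intro p hp hex
    obtain ⟨-, hGL, hG0, hmono, hle, -, -⟩ := hF p hp
    have hfr := hδfr p hex
    have hrp := hrδ p hp
    have hcont : ContinuousOn (fun s => ‖gMap x p (F p) s - x‖) (Icc 0 r) :=
      ((hGL.continuous.sub continuous_const).norm).continuousOn
    have hmem : r ∈ Icc (‖gMap x p (F p) 0 - x‖) (‖gMap x p (F p) r - x‖) := by
      rw [hG0]; simp only [sub_self, norm_zero]
      exact ⟨hr.le, hle r hr.le⟩
    obtain ⟨s, hs, hsr⟩ := intermediate_value_Icc hr.le hcont hmem
    simp only at hsr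
    have hs0 : 0 < s := by
      rcases hs.1.eq_or_lt with h | h
      · rw [← h, hG0] at hsr; simp at hsr; linarith
      · exact h
    refine ⟨s, hs0, by linarith [hs.2], ?_⟩
    ext t
    simp only [hA, mem_inter_iff, mem_preimage, mem_closedBall, dist_eq_norm]
    constructor
    · rintro ⟨ht, -, h2⟩
      refine ⟨ht.1, ?_⟩
      by_contra! hlt
      have := hmono s t hs.1 hlt
      linarith
    · intro ht
      refine ⟨⟨ht.1, by linarith [ht.2, hs.2]⟩, hfr t ⟨ht.1, by linarith [ht.2, hs.2]⟩, ?_⟩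
      rcases ht.2.eq_or_lt with h | h
      · rw [h, hsr]
      · rw [← hsr]; exact (hmono t s ht.1 h).le
  refine ⟨r, hr, F, A, ?_, ?_, ?_⟩
  · intro p hp
    obtain ⟨hFL, hGL, hG0, hmono, hle, -, -⟩ := hF p hp
    refine ⟨hFL.continuous.continuousOn, hFL.lipschitzOnWith, hAcl p hp, inter_subset_left,
      hGL.lipschitzOnWith, ?_⟩
    by_cases hex : ∃ δ' > 0, ∀ s ∈ Icc 0 δ', gMap x p (F p) s ∈ frontier (eNbhd E ε)
    · left; exact hAint p hp hex
    · right
      push Not at hex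
      obtain ⟨I, h1, h2, h3, h4⟩ := intervals
        (P := fun a b => Ioo a b ⊆ Icc 0 (ε / 2) \ A p) (by
          intro d hd
          obtain ⟨s, hs, hsn⟩ := hex (min (d / 2) (ε / 4)) (by positivity)
          have hs0 : 0 < s := by
            rcases hs.1.eq_or_lt with h | h
            · rw [← h, hG0] at hsn; exact absurd hx hsn
            · exact h
          have hsd : s ≤ d / 2 := hs.2.trans (min_le_left _ _)
          have hsε : s ≤ ε / 4 := hs.2.trans (min_le_right _ _)
          have hopen : (A p)ᶜ ∈ 𝓝 s :=
            (hAcl p hp).isOpen_compl.mem_nhds (fun h => hsn h.2.1)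
          obtain ⟨τ, hτ, hball⟩ := Metric.mem_nhds_iff.1 hopen
          have hm1 : 0 < min (τ / 2) (min (s / 2) (min (d / 4) (ε / 8))) := by positivity
          set m := min (τ / 2) (min (s / 2) (min (d / 4) (ε / 8))) with hm
          have hmτ : m ≤ τ / 2 := min_le_left _ _
          have hms : m ≤ s / 2 := (min_le_right _ _).trans (min_le_left _ _)
          have hmd : m ≤ d / 4 := (min_le_right _ _).trans ((min_le_right _ _).trans (min_le_left _ _))
          have hme : m ≤ ε / 8 := (min_le_right _ _).trans ((min_le_right _ _).trans (min_le_right _ _))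
          refine ⟨s - m, s + m, by linarith, by linarith, by linarith, ?_⟩
          intro t ht
          refine ⟨⟨by linarith [ht.1], by linarith [ht.2]⟩, ?_⟩
          apply hball
          rw [mem_ball, Real.dist_eq, abs_lt]
          constructor <;> linarith [ht.1, ht.2])
      exact ⟨I, h1, h2, h3, h4⟩
  · apply Subset.antisymm
    · rintro z ⟨hz, hzr⟩
      rw [mem_closedBall, dist_eq_norm] at hzr
      simp only [mem_iUnion]
      by_cases hzx : z = x
      · obtain ⟨z', hz', hne, hz'r⟩ := accum hE hε hx hr₀
        obtain ⟨p, hp, -⟩ := hcapt z' hz' hne hz'r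
        have hG0 := (hF p hp).2.2.1
        refine ⟨p, hp, 0, ⟨⟨le_rfl, by positivity⟩, ?_⟩, ?_⟩
        · rw [mem_preimage, hG0]
          exact ⟨hx, mem_closedBall_self hr.le⟩
        · rw [hzx]; exact hG0
      · obtain ⟨p, hp, w, hw, hwz, hz0, hwy⟩ := hcapt z hz hzx (lt_of_le_of_lt hzr hrr₀)
        obtain ⟨-, -, -, -, hle, hcap, -⟩ := hF p hp
        have hzG := hcap z hz w hw hwz (by linarith) hz0 hwy
        have hs := hle _ hz0
        rw [← hzG] at hs
        refine ⟨p, hp, ⟪z - x, p.1⟫, ⟨⟨hz0, by linarith⟩, ?_⟩, hzG.symm⟩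
        rw [mem_preimage, ← hzG]
        exact ⟨hz, by rw [mem_closedBall, dist_eq_norm]; exact hzr⟩
    · intro z hz
      simp only [mem_iUnion] at hz
      obtain ⟨p, hp, s, hs, rfl⟩ := hz
      exact hs.2
  · intro h p hp
    exact hAint p hp ((hF p hp).2.2.2.2.2.2 h)

end
end
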